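/- Let Φ = B_n, let I ⊆ Δ, and let λ ∈ Λ_I⁺. Then Σ_{β∈Ψ_λ⁺} θ(s_βλ) = 0 in the free ℤ-module on h* if and only if every element of Ψ_λ⁺⁺ is of one of the following forms: (1) β = e_i or β = e_i + e_j with q_{s−1} < i ≤ q_s ≤ q_{m−1} < j ≤ n for some 1 ≤ s < m, where λ_i = λ_j ∈ (1/2)ℤ_{>0} and λ_k ∉ {0, −λ_i} for all q_{s−1} < k ≤ q_s; (2) β = e_i or β = e_i + e_j with q_{s−1} < i < j ≤ q_s for some 1 ≤ s < m, where λ_i ∈ ℤ_{>0}, λ_j = 0, λ_k ≠ −λ_i for all q_{s−1} < k ≤ q_s, and λ_l ≠ λ_i for all q_{m−1} < l ≤ n. -/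

import Mathlib

open scoped RealInnerProductSpace
open Classical

noncomputable section

namespace JantzenGVM

variable {V : Type*} [NormedAddCommGroup V] [InnerProductSpace ℝ V] [FiniteDimensional ℝ V]

/-- The coroot `α^∨ = 2α/⟨α,α⟩` of a vector `α` (junk value `0` when `α = 0`). -/
def coroot (α : V) : V := (2 / ⟪α, α⟫) • α

/-- The linear functional `v ↦ ⟨v, α^∨⟩`. -/
def corootForm (α : V) : V →ₗ[ℝ] ℝ where
  toFun v := ⟪v, coroot α⟫
  map_add' x y := by simp [inner_add_left]
  map_smul' c x := by simp [inner_smul_left]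

lemma corootForm_self {α : V} (h : ⟪α, α⟫ ≠ 0) : corootForm α α = 2 := by
  simp only [corootForm, coroot, LinearMap.coe_mk, AddHom.coe_mk, real_inner_smul_right]
  field_simp

/-- The reflection `s_α` as a linear automorphism of `V` (the identity when `⟨α,α⟩ = 0`). -/
def reflV (α : V) : V ≃ₗ[ℝ] V :=
  if h : ⟪α, α⟫ = 0 then LinearEquiv.refl ℝ V
  else Module.reflection (corootForm_self h)

/-- `h* = ℂ ⊗ V`, realized as the space of real-linear functionals `V → ℂ` via the
inner product; an element `λ` pairs with a root `α` by `⟨λ, α⟩ = λ α` and with the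
coroot by `⟨λ, α^∨⟩ = λ (coroot α)`. -/
abbrev HStar (V : Type*) [NormedAddCommGroup V] [InnerProductSpace ℝ V] := V →ₗ[ℝ] ℂ

/-- The canonical embedding of `V` into `h*`. -/
def emb (α : V) : HStar V where
  toFun v := (⟪α, v⟫ : ℂ)
  map_add' x y := by simp [inner_add_right]
  map_smul' c x := by simp [inner_smul_right, Complex.real_smul]

/-- The action of a linear automorphism `w` of `V` on `h*`: `(w • λ)(v) = λ(w⁻¹ v)`. -/
def wAct (w : V ≃ₗ[ℝ] V) (l : HStar V) : HStar V := l ∘ₗ (w.symm : V →ₗ[ℝ] V)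

/-- The reflection `s_β λ = λ - ⟨λ, β^∨⟩ β` acting on `h*`. -/
def sRefl (β : V) (l : HStar V) : HStar V := l - l (coroot β) • emb β

/-- The group generated by the reflections in the elements of `Φ'`. -/
def weyl (Φ' : Set V) : Subgroup (V ≃ₗ[ℝ] V) :=
  Subgroup.closure {w | ∃ α ∈ Φ', w = reflV α}

/-- A finite, reduced, crystallographic root system spanning the Euclidean space `V`,
together with a choice of positive system and the corresponding simple system. -/
structure RootSys (V : Type*) [NormedAddCommGroup V] [InnerProductSpace ℝ V]
    [FiniteDimensional ℝ V] where
  Φ : Finset V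
  pos : Finset V
  Δ : Finset V
  ne_zero : ∀ α ∈ Φ, α ≠ (0 : V)
  span_eq_top : Submodule.span ℝ (Φ : Set V) = ⊤
  reduced : ∀ α ∈ Φ, ∀ c : ℝ, c • α ∈ Φ → c = 1 ∨ c = -1
  refl_mem : ∀ α ∈ Φ, ∀ β ∈ Φ, reflV α β ∈ Φ
  crystallographic : ∀ α ∈ Φ, ∀ β ∈ Φ, ∃ n : ℤ, ⟪β, coroot α⟫ = (n : ℝ)
  pos_subset : pos ⊆ Φ
  mem_pos_or : ∀ α ∈ Φ, α ∈ pos ∨ -α ∈ pos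
  not_both : ∀ α ∈ pos, -α ∉ pos
  simple_subset : Δ ⊆ pos
  simple_indep : LinearIndependent ℝ (fun x : {a : V // a ∈ Δ} => x.1)
  simple_gen : ∀ β ∈ pos, ∃ c : V → ℝ, (∀ α ∈ Δ, 0 ≤ c α) ∧ β = ∑ α ∈ Δ, c α • α

/-- A subsystem of the root system: a subset of `Φ` closed under its own reflections. -/
def IsSubsystem (S : RootSys V) (Φ' : Set V) : Prop :=
  Φ' ⊆ (S.Φ : Set V) ∧ ∀ α ∈ Φ', ∀ β ∈ Φ', reflV α β ∈ Φ'

/-- The length of `w`, i.e. the number of positive roots sent to negative roots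
(this equals the Coxeter length for elements of the Weyl group). -/
def len (S : RootSys V) (w : V ≃ₗ[ℝ] V) : ℕ :=
  {β ∈ (S.pos : Set V) | w β ∉ (S.pos : Set V)}.ncard

/-- `Φ_I = ℤI ∩ Φ`, the subsystem generated by a subset `I` of the simple roots. -/
def PhiI (S : RootSys V) (I : Finset V) : Set V :=
  {α ∈ (S.Φ : Set V) | α ∈ Submodule.span ℤ (I : Set V)}

/-- `z` is a positive integer. -/
def IsPosInt (z : ℂ) : Prop := ∃ n : ℤ, 0 < n ∧ z = (n : ℂ)

/-- `z` is an integer. -/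
def IsInt (z : ℂ) : Prop := ∃ n : ℤ, z = (n : ℂ)

/-- `Λ_I⁺ = {λ ∈ h* : ⟨λ, α^∨⟩ ∈ ℤ_{>0} for all α ∈ I}`. -/
def LambdaP (I : Set V) : Set (HStar V) :=
  {l | ∀ α ∈ I, IsPosInt (l (coroot α))}

/-- `Λ⁺(Φ'', Φ') = {ν ∈ ℂΦ' : ⟨ν, α^∨⟩ ∈ ℤ_{>0} for all α ∈ Φ'' ∩ Φ⁺}`. -/
def LambdaPSub (S : RootSys V) (Φ'' Φ' : Set V) : Set (HStar V) :=
  {l | l ∈ Submodule.span ℂ (emb '' Φ') ∧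
       ∀ α ∈ Φ'' ∩ (S.pos : Set V), IsPosInt (l (coroot α))}

/-- `λ` is `Φ''`-regular: `⟨λ, α⟩ ≠ 0` for all `α ∈ Φ''`. -/
def IsRegularOn (Φ'' : Set V) (l : HStar V) : Prop := ∀ α ∈ Φ'', l α ≠ 0

/-- `Ψ⁺(λ, Φ'', Φ') = {β ∈ (Φ' ∩ Φ⁺) \ Φ'' : ⟨λ, β^∨⟩ ∈ ℤ_{>0}}`. -/
def PsiP (S : RootSys V) (Φ'' Φ' : Set V) (l : HStar V) : Set V :=
  {β | β ∈ Φ' ∩ (S.pos : Set V) ∧ β ∉ Φ'' ∧ IsPosInt (l (coroot β))}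

/-- `Ψ⁺⁺(λ, Φ'', Φ') = {β ∈ Ψ⁺(λ, Φ'', Φ') : s_β λ is Φ''-regular}`. -/
def PsiPP (S : RootSys V) (Φ'' Φ' : Set V) (l : HStar V) : Set V :=
  {β ∈ PsiP S Φ'' Φ' l | ∀ α ∈ Φ'', (sRefl β l) α ≠ 0}

/-- The sign function: `sgn(λ, μ) = (-1)^{ℓ(w)}` if `λ, μ` are `Φ''`-regular and
`μ = wλ` for some `w ∈ W(Φ'')`, and `0` otherwise. -/
def sgnW (S : RootSys V) (Φ'' : Set V) (l m : HStar V) : ℤ :=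
  if h : IsRegularOn Φ'' l ∧ IsRegularOn Φ'' m ∧ ∃ w, w ∈ weyl Φ'' ∧ m = wAct w l
  then (-1) ^ len S h.2.2.choose else 0

/-- The Jantzen coefficient `c(λ, μ, Φ'', Φ') = Σ_{β ∈ Ψ⁺⁺(λ,Φ'',Φ')} sgn(s_β λ, μ)`. -/
def jc (S : RootSys V) (Φ'' Φ' : Set V) (l m : HStar V) : ℤ :=
  ∑ᶠ β ∈ PsiPP S Φ'' Φ' l, sgnW S Φ'' (sRefl β l) m

/-- The symmetrized Jantzen coefficient `c̃(λ, μ, Φ'', Φ')`. -/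
def jcSym (S : RootSys V) (Φ'' Φ' : Set V) (l m : HStar V) : ℤ :=
  jc S Φ'' Φ' l m + jc S Φ'' Φ' m l

/-- `θ(λ) = Σ_{w ∈ W_I} (-1)^{ℓ(w)} e^{wλ}` in the free `ℤ`-module on `h*`. -/
def theta (S : RootSys V) (I : Finset V) (l : HStar V) : HStar V →₀ ℤ :=
  ∑ᶠ w ∈ (weyl (PhiI S I) : Set (V ≃ₗ[ℝ] V)),
    Finsupp.single (wAct w l) ((-1) ^ len S w)

/-- `Φ_λ = {α ∈ Φ : ⟨λ, α⟩ = 0}`. -/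
def singSet (S : RootSys V) (l : HStar V) : Set V :=
  {α ∈ (S.Φ : Set V) | l α = 0}

/-- `Φ_{[λ]} = {α ∈ Φ : ⟨λ, α^∨⟩ ∈ ℤ}`. -/
def integralSet (S : RootSys V) (l : HStar V) : Set V :=
  {α ∈ (S.Φ : Set V) | IsInt (l (coroot α))}

/-- `(ℚ A) ∩ Φ`, the intersection of the rational span of `A` with `Φ`.
Taking `A = Φ_I ∪ {β}` gives `Φ_{β,1}`; taking `A = Φ_λ ∪ {β}` gives `Φ_{β,2}`. -/
def ratSpanRoots (S : RootSys V) (A : Set V) : Set V :=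
  {γ ∈ (S.Φ : Set V) | ∃ (t : Finset V) (c : V → ℚ),
    (t : Set V) ⊆ A ∧ γ = ∑ α ∈ t, (c α : ℝ) • α}

/-- `Φ_{β,0}`, the irreducible component of `Φ` containing `β`. -/
def component (S : RootSys V) (β : V) : Set V :=
  {γ ∈ (S.Φ : Set V) |
    Relation.ReflTransGen
      (fun x y => x ∈ (S.Φ : Set V) ∧ y ∈ (S.Φ : Set V) ∧ ⟪x, y⟫ ≠ 0) β γ}

/-- `λ|_{Φ'}`: the unique element of `ℂΦ'` with `⟨λ|_{Φ'}, α^∨⟩ = ⟨λ, α^∨⟩`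
for all `α ∈ Φ'`. -/
def restrictW (Φ' : Set V) (l : HStar V) : HStar V :=
  letI : Nonempty (HStar V) := ⟨0⟩
  Classical.epsilon fun m =>
    m ∈ Submodule.span ℂ (emb '' Φ') ∧ ∀ α ∈ Φ', m (coroot α) = l (coroot α)

/-- `ᴵWᴶ = {w ∈ W : ℓ(uwv) = ℓ(u) + ℓ(w) + ℓ(v) for all u ∈ W_I, v ∈ W_J}`. -/
def doubleCoset (S : RootSys V) (I J : Finset V) : Set (V ≃ₗ[ℝ] V) :=
  {w | w ∈ weyl (S.Φ : Set V) ∧ ∀ u ∈ weyl (PhiI S I), ∀ v ∈ weyl (PhiI S J),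
    len S (u * w * v) = len S u + len S w + len S v}

/-- The fundamental weight `ϖ_j` relative to an enumeration `e` of the simple roots:
the unique element of `h*` with `⟨ϖ_j, α_k^∨⟩ = δ_{jk}`. -/
def fundWeight {n : ℕ} (e : Fin n → V) (j : Fin n) : HStar V :=
  letI : Nonempty (HStar V) := ⟨0⟩
  Classical.epsilon fun m => ∀ k : Fin n, m (coroot (e k)) = if k = j then 1 else 0

/-- The labels of the irreducible Dynkin types. -/
inductive LieType | A | B | C | D | E | F | G
deriving DecidableEq

/-- The Cartan matrix of type `A_n` (1-based indices): entry `(i,j)` is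
`⟨α_i, α_j^∨⟩`. -/
def cartanA (i j : ℕ) : ℤ :=
  if i = j then 2 else if i + 1 = j ∨ j + 1 = i then -1 else 0

/-- The Cartan matrices of the irreducible types in the standard (Bourbaki/Humphreys)
numbering of the Dynkin diagram: `cartanEntry t n i j = ⟨α_i, α_j^∨⟩` (1-based). -/
def cartanEntry : LieType → ℕ → ℕ → ℕ → ℤ
  | .A, _, i, j => cartanA i j
  | .B, n, i, j => if i + 1 = n ∧ j = n then -2 else cartanA i j
  | .C, n, i, j => if i = n ∧ j + 1 = n then -2 else cartanA i j
  | .D, n, i, j =>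
      if i = j then 2
      else if (i + 2 = n ∧ j = n) ∨ (i = n ∧ j + 2 = n) then -1
      else if (i + 1 = n ∧ j = n) ∨ (i = n ∧ j + 1 = n) then 0
      else cartanA i j
  | .E, _, i, j =>
      if i = j then 2
      else if (i = 1 ∧ j = 3) ∨ (i = 3 ∧ j = 1) ∨ (i = 2 ∧ j = 4) ∨ (i = 4 ∧ j = 2) then -1
      else if (i = 1 ∧ j = 2) ∨ (i = 2 ∧ j = 1) ∨ (i = 2 ∧ j = 3) ∨ (i = 3 ∧ j = 2) then 0
      else cartanA i j
  | .F, _, i, j => if i = 2 ∧ j = 3 then -2 else cartanA i j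
  | .G, _, i, j => if i = 2 ∧ j = 1 then -3 else cartanA i j

/-- The standard basis vector `e_k` (1-based index, junk `0` outside `1 ≤ k ≤ n`). -/
def stdE (n k : ℕ) : EuclideanSpace ℝ (Fin n) :=
  if h : 1 ≤ k ∧ k ≤ n then EuclideanSpace.single ⟨k - 1, by omega⟩ 1 else 0

/-- The labels `B`, `C`, `D` of the classical non-`A` types. -/
inductive BCD | B | C | D
deriving DecidableEq

/-- The root set of `B_n` / `C_n` / `D_n` in the standard realization. -/
def bcdRoots (t : BCD) (n : ℕ) : Set (EuclideanSpace ℝ (Fin n)) :=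
  {v | (∃ i j : ℕ, 1 ≤ i ∧ i < j ∧ j ≤ n ∧
          (v = stdE n i - stdE n j ∨ v = -(stdE n i - stdE n j) ∨
           v = stdE n i + stdE n j ∨ v = -(stdE n i + stdE n j))) ∨
       (match t with
        | .B => ∃ i : ℕ, 1 ≤ i ∧ i ≤ n ∧ (v = stdE n i ∨ v = -stdE n i)
        | .C => ∃ i : ℕ, 1 ≤ i ∧ i ≤ n ∧ (v = (2:ℝ) • stdE n i ∨ v = -((2:ℝ) • stdE n i))
        | .D => False)}

/-- The positive roots of `B_n` / `C_n` / `D_n` in the standard realization. -/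
def bcdPos (t : BCD) (n : ℕ) : Set (EuclideanSpace ℝ (Fin n)) :=
  {v | (∃ i j : ℕ, 1 ≤ i ∧ i < j ∧ j ≤ n ∧
          (v = stdE n i - stdE n j ∨ v = stdE n i + stdE n j)) ∨
       (match t with
        | .B => ∃ i : ℕ, 1 ≤ i ∧ i ≤ n ∧ v = stdE n i
        | .C => ∃ i : ℕ, 1 ≤ i ∧ i ≤ n ∧ v = (2:ℝ) • stdE n i
        | .D => False)}

/-- The simple roots of `B_n` / `C_n` / `D_n` in the standard realization. -/
def bcdSimple (t : BCD) (n : ℕ) : Set (EuclideanSpace ℝ (Fin n)) :=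
  {v | (∃ i : ℕ, 1 ≤ i ∧ i < n ∧ v = stdE n i - stdE n (i + 1)) ∨
       (match t with
        | .B => v = stdE n n
        | .C => v = (2:ℝ) • stdE n n
        | .D => v = stdE n (n - 1) + stdE n n)}

/-- The simple root `α_k` of `B_n` / `C_n` / `D_n` (1-based index `k`). -/
def bcdAlpha (t : BCD) (n k : ℕ) : EuclideanSpace ℝ (Fin n) :=
  if k < n then stdE n k - stdE n (k + 1)
  else match t with
  | .B => stdE n n
  | .C => (2:ℝ) • stdE n n
  | .D => stdE n (n - 1) + stdE n n

/-!
Up to sign, `θ(μ)` depends only on the `W_I`-orbit of `μ`, and it is supported on that orbit. Hence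
`Σ_{β ∈ Ψ_λ⁺} θ(s_β λ)` vanishes iff its partial sum over each class of roots `β` with
`W_I`-conjugate weights `s_β λ` does. The power sums of exponents `1`, `2`, `3` of the coordinates
in each block but the last are `W_I`-invariant, and comparing them shows that the only classes with
more than one element are the sets `{e_i} ∪ {e_i + e_j : j a mate of i}`, where `j` is a mate of `i`
if `λ_j = 0` and `j` lies in the block of `i`, or `λ_j = λ_i` and `j` lies in the last block.
Reflecting in `e_i - e_j` or in `e_j` respectively gives
`θ(s_{e_i + e_j} λ) = -θ(s_{e_i} λ)`, so the class contributes
`(1 - #mates) θ(s_{e_i} λ)`. If `θ(s_{e_i} λ) ≠ 0`, this is zero iff `i` has exactly one mate, and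
forms (1) and (2) distinguish where the mate lies.
-/

/-! ### Reflections and the sign character -/

section

variable {E : Type*} [NormedAddCommGroup E] [InnerProductSpace ℝ E]

lemma wAct_mul (u w : E ≃ₗ[ℝ] E) (l : HStar E) : wAct (u * w) l = wAct u (wAct w l) :=
  rfl

lemma wAct_one (l : HStar E) : wAct 1 l = l :=
  rfl

lemma wAct_inv_eq_iff {w : E ≃ₗ[ℝ] E} {l l' : HStar E} : wAct w⁻¹ l' = l ↔ l' = wAct w l := by
  constructor
  · rintro rfl
    rw [← wAct_mul, mul_inv_cancel, wAct_one]
  · rintro rfl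
    rw [← wAct_mul, inv_mul_cancel, wAct_one]

lemma sRefl_eq_self {α : E} {l : HStar E} (h : l α = 0) : sRefl α l = l := by
  simp [sRefl, coroot, h]

end

lemma reflV_apply (α v : V) : reflV α v = v - ⟪v, coroot α⟫ • α := by
  unfold reflV
  split_ifs with h
  · simp [inner_self_eq_zero.mp h]
  · simp [Module.reflection_apply, corootForm]

lemma reflV_reflV (α v : V) : reflV α (reflV α v) = v := by
  unfold reflV
  split_ifs with h
  · simp
  · exact Module.involutive_reflection (corootForm_self h) v

lemma reflV_mul_self (α : V) : reflV α * reflV α = 1 :=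
  LinearEquiv.ext (reflV_reflV α)

lemma reflV_symm_apply (α v : V) : (reflV α).symm v = reflV α v := by
  rw [LinearEquiv.symm_apply_eq, reflV_reflV]

lemma reflV_self {α : V} (h : α ≠ 0) : reflV α α = -α := by
  have h2 : ⟪α, coroot α⟫ = 2 := corootForm_self (inner_self_ne_zero.mpr h)
  rw [reflV_apply, h2, two_smul]
  abel

lemma reflV_neg (α : V) : reflV (-α) = reflV α := by
  ext v
  simp [reflV_apply, coroot]

lemma wAct_reflV (α : V) (l : HStar V) : wAct (reflV α) l = sRefl α l := by
  ext v
  simp only [wAct, LinearMap.comp_apply, LinearEquiv.coe_coe, reflV_symm_apply, reflV_apply,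
    map_sub, map_smul, coroot, real_inner_smul_right, sRefl, emb, LinearMap.sub_apply,
    LinearMap.smul_apply, LinearMap.coe_mk, AddHom.coe_mk, Complex.real_smul, smul_eq_mul,
    real_inner_comm v α]
  push_cast
  ring

theorem weyl_induction {Φ' : Set V} {p : (V ≃ₗ[ℝ] V) → Prop} (one : p 1)
    (reflV_mul : ∀ α ∈ Φ', ∀ w, p w → p (reflV α * w)) {w : V ≃ₗ[ℝ] V} (hw : w ∈ weyl Φ') :
    p w := by
  induction hw using Subgroup.closure_induction_left with
  | one => exact one
  | mul_left x hx w _ ih =>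
    obtain ⟨α, hα, rfl⟩ := hx
    exact reflV_mul α hα w ih
  | inv_mul_cancel x hx w _ ih =>
    obtain ⟨α, hα, rfl⟩ := hx
    rw [inv_eq_of_mul_eq_one_left (reflV_mul_self α)]
    exact reflV_mul α hα w ih

lemma reflV_mem_weyl {Φ' : Set V} {α : V} (hα : α ∈ Φ') : reflV α ∈ weyl Φ' :=
  Subgroup.subset_closure ⟨α, hα, rfl⟩

lemma RootSys.neg_mem (S : RootSys V) {γ : V} (h : γ ∈ S.Φ) : -γ ∈ S.Φ := by
  simpa only [reflV_self (S.ne_zero γ h)] using S.refl_mem γ h γ h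

lemma RootSys.eq_of_reflV_eq_neg (S : RootSys V) {α β : V} (hα : α ∈ S.pos) (hβ : β ∈ S.pos)
    (h : reflV α β = -β) : β = α := by
  have hβα : (⟪β, coroot α⟫ / 2) • α = β := by
    have h2 : (2 : ℝ) • β = ⟪β, coroot α⟫ • α := by
      rw [two_smul, ← sub_neg_eq_add, ← h, reflV_apply, sub_sub_cancel]
    rw [div_eq_inv_mul, mul_smul, ← h2, smul_smul]
    norm_num
  rcases S.reduced α (S.pos_subset hα) _ (hβα.symm ▸ S.pos_subset hβ) with hc | hc
  · rw [← hβα, hc, one_smul]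
  · rw [hc, neg_one_smul] at hβα
    exact absurd (hβα ▸ hβ) (S.not_both α hα)

/-- The sign of a root: `1` on positive roots and `-1` on negative roots. -/
def rootSign (S : RootSys V) (γ : V) : ℤˣ := if γ ∈ S.pos then 1 else -1

/-- The positive root among `γ` and `-γ`. -/
def posRep (S : RootSys V) (γ : V) : V := rootSign S γ • γ

lemma rootSign_of_mem_pos (S : RootSys V) {γ : V} (h : γ ∈ S.pos) : rootSign S γ = 1 :=
  if_pos h

lemma rootSign_neg (S : RootSys V) {γ : V} (h : γ ∈ S.Φ) : rootSign S (-γ) = -rootSign S γ := by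
  by_cases h1 : γ ∈ S.pos
  · simp [rootSign, h1, S.not_both γ h1]
  · simp [rootSign, h1, (S.mem_pos_or γ h).resolve_left h1]

lemma rootSign_units_smul (S : RootSys V) {γ : V} (h : γ ∈ S.Φ) (ε : ℤˣ) :
    rootSign S (ε • γ) = ε * rootSign S γ := by
  rcases Int.units_eq_one_or ε with rfl | rfl <;> simp [rootSign_neg S h]

lemma posRep_of_mem_pos (S : RootSys V) {γ : V} (h : γ ∈ S.pos) : posRep S γ = γ := by
  rw [posRep, rootSign_of_mem_pos S h, one_smul]

lemma posRep_units_smul (S : RootSys V) {γ : V} (h : γ ∈ S.Φ) (ε : ℤˣ) :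
    posRep S (ε • γ) = posRep S γ := by
  rw [posRep, rootSign_units_smul S h, smul_smul, mul_right_comm, Int.units_mul_self, one_mul,
    posRep]

lemma posRep_neg (S : RootSys V) {γ : V} (h : γ ∈ S.Φ) : posRep S (-γ) = posRep S γ := by
  rw [posRep, rootSign_neg S h, Units.neg_smul, smul_neg, neg_neg, posRep]

lemma posRep_mem_pos (S : RootSys V) {γ : V} (h : γ ∈ S.Φ) : posRep S γ ∈ S.pos := by
  by_cases h1 : γ ∈ S.pos
  · rwa [posRep_of_mem_pos S h1]
  · simpa [posRep, rootSign, h1] using (S.mem_pos_or γ h).resolve_left h1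

lemma map_posRep (S : RootSys V) (f : V ≃ₗ[ℝ] V) (γ : V) :
    f (posRep S γ) = rootSign S γ • f γ := by
  rw [posRep, Units.smul_def, map_zsmul, Units.smul_def]

section

variable (S : RootSys V) {α β : V}

lemma posRep_reflV_mem_pos (hα : α ∈ S.Φ) (hβ : β ∈ S.pos) : posRep S (reflV α β) ∈ S.pos :=
  posRep_mem_pos S (S.refl_mem α hα β (S.pos_subset hβ))

lemma posRep_reflV_posRep_reflV (α : V) (hβ : β ∈ S.pos) :
    posRep S (reflV α (posRep S (reflV α β))) = β := by
  rw [map_posRep, reflV_reflV, posRep_units_smul S (S.pos_subset hβ),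
    posRep_of_mem_pos S hβ]

lemma prod_rootSign_reflV (hα : α ∈ S.pos) : ∏ β ∈ S.pos, rootSign S (reflV α β) = -1 := by
  have hα' := S.pos_subset hα
  suffices h : ∏ β ∈ S.pos.erase α, rootSign S (reflV α β) = 1 by
    rw [← Finset.mul_prod_erase _ _ hα, h, reflV_self (S.ne_zero α hα'), rootSign_neg S hα',
      rootSign_of_mem_pos S hα, mul_one]
  refine Finset.prod_involution (fun β _ => posRep S (reflV α β)) ?_ ?_ ?_ ?_
  · intro β hβ
    have hβ := Finset.mem_of_mem_erase hβ
    rw [map_posRep, reflV_reflV, rootSign_units_smul S (S.pos_subset hβ),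
      rootSign_of_mem_pos S hβ, mul_one, Int.units_mul_self]
  · intro β hβ hsign hfix
    have hneg : rootSign S (reflV α β) = -1 := (Int.units_eq_one_or _).resolve_left hsign
    rw [posRep, hneg, Units.neg_smul, one_smul, neg_eq_iff_eq_neg] at hfix
    exact Finset.ne_of_mem_erase hβ
      (S.eq_of_reflV_eq_neg hα (Finset.mem_of_mem_erase hβ) hfix)
  · intro β hβ
    have hβp := Finset.mem_of_mem_erase hβ
    refine Finset.mem_erase.mpr ⟨fun h => Finset.ne_of_mem_erase hβ ?_,
      posRep_reflV_mem_pos S hα' hβp⟩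
    rw [← posRep_reflV_posRep_reflV S α hβp, h, reflV_self (S.ne_zero α hα'),
      posRep_neg S hα', posRep_of_mem_pos S hα]
  · exact fun β hβ => posRep_reflV_posRep_reflV S α (Finset.mem_of_mem_erase hβ)

lemma neg_one_pow_len (w : V ≃ₗ[ℝ] V) :
    (-1 : ℤˣ) ^ len S w = ∏ β ∈ S.pos, rootSign S (w β) := by
  have h : {β ∈ (S.pos : Set V) | w β ∉ (S.pos : Set V)}
      = ((S.pos.filter fun β => w β ∉ S.pos : Finset V) : Set V) := by
    ext; simp
  simp only [len, h, Set.ncard_coe_finset, rootSign, Finset.prod_ite, Finset.prod_const_one,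
    Finset.prod_const, one_mul]

lemma neg_one_pow_len_mul_reflV {w : V ≃ₗ[ℝ] V} (hw : ∀ β ∈ S.Φ, w β ∈ S.Φ) (hα : α ∈ S.Φ) :
    (-1 : ℤˣ) ^ len S (w * reflV α) = -(-1) ^ len S w := by
  wlog hp : α ∈ S.pos generalizing α
  · rw [← reflV_neg]
    exact this (S.neg_mem hα) ((S.mem_pos_or α hα).resolve_left hp)
  have hfactor : ∀ β ∈ S.pos, rootSign S ((w * reflV α) β)
      = rootSign S (w (posRep S (reflV α β))) * rootSign S (reflV α β) := by
    intro β hβ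
    rw [map_posRep,
      rootSign_units_smul S (hw _ (S.refl_mem α hα β (S.pos_subset hβ))), mul_right_comm,
      Int.units_mul_self, one_mul, LinearEquiv.mul_apply]
  have hperm : ∏ β ∈ S.pos, rootSign S (w (posRep S (reflV α β)))
      = ∏ β ∈ S.pos, rootSign S (w β) :=
    Finset.prod_nbij' (fun β => posRep S (reflV α β)) (fun β => posRep S (reflV α β))
      (fun _ => posRep_reflV_mem_pos S hα) (fun _ => posRep_reflV_mem_pos S hα)
      (fun _ => posRep_reflV_posRep_reflV S α) (fun _ => posRep_reflV_posRep_reflV S α)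
      (fun _ _ => rfl)
  rw [neg_one_pow_len, neg_one_pow_len, Finset.prod_congr rfl hfactor, Finset.prod_mul_distrib,
    prod_rootSign_reflV S hp, hperm, mul_neg_one]

end

lemma len_one (S : RootSys V) : len S 1 = 0 := by
  simp [len]

/-! ### Antisymmetry and orbit decomposition of `θ` -/

section

variable (S : RootSys V) (I : Finset V)

lemma apply_mem_of_mem_weyl {w : V ≃ₗ[ℝ] V} (hw : w ∈ weyl (PhiI S I)) :
    ∀ β ∈ S.Φ, w β ∈ S.Φ :=
  weyl_induction (p := fun w => ∀ β ∈ S.Φ, w β ∈ S.Φ) (fun _ => id)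
    (fun α hα _ ih β hβ => S.refl_mem α hα.1 _ (ih β hβ)) hw

lemma weyl_finite : (weyl (PhiI S I) : Set (V ≃ₗ[ℝ] V)).Finite := by
  let restrict (w : weyl (PhiI S I)) (γ : S.Φ) : S.Φ :=
    ⟨w.1 γ, apply_mem_of_mem_weyl S I w.2 _ γ.2⟩
  have hinj : Function.Injective restrict := fun u w h =>
    Subtype.ext <| LinearEquiv.toLinearMap_injective <| LinearMap.ext_on S.span_eq_top
      fun γ hγ => congrArg Subtype.val (congrFun h ⟨γ, hγ⟩)
  exact Set.finite_coe_iff.mp (Finite.of_injective restrict hinj)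

lemma theta_eq_sum (l : HStar V) :
    theta S I l = ∑ w ∈ (weyl_finite S I).toFinset,
      Finsupp.single (wAct w l) ((-1) ^ len S w) :=
  finsum_mem_eq_finite_toFinset_sum _ _

lemma theta_sRefl {α : V} (hα : α ∈ PhiI S I) (l : HStar V) :
    theta S I (sRefl α l) = -theta S I l := by
  have hmem : ∀ w ∈ (weyl_finite S I).toFinset, w * reflV α ∈ (weyl_finite S I).toFinset := by
    simp only [Set.Finite.mem_toFinset]
    exact fun w hw => mul_mem hw (reflV_mem_weyl hα)
  have hinvol (w : V ≃ₗ[ℝ] V) : w * reflV α * reflV α = w := by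
    rw [mul_assoc, reflV_mul_self, mul_one]
  rw [theta_eq_sum, theta_eq_sum, ← Finset.sum_neg_distrib]
  refine Finset.sum_nbij' (· * reflV α) (· * reflV α) hmem hmem (fun w _ => hinvol w)
    (fun w _ => hinvol w) fun w hw => ?_
  have hsign : (-1 : ℤ) ^ len S (w * reflV α) = -(-1) ^ len S w := by
    simpa using congrArg Units.val (neg_one_pow_len_mul_reflV S
      (apply_mem_of_mem_weyl S I ((weyl_finite S I).mem_toFinset.mp hw)) hα.1)
  rw [hsign, wAct_mul, wAct_reflV, Finsupp.single_neg, neg_neg]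

lemma theta_eq_zero_of_apply_eq_zero {α : V} (hα : α ∈ PhiI S I) {l : HStar V} (h : l α = 0) :
    theta S I l = 0 := by
  have hneg := theta_sRefl S I hα l
  rw [sRefl_eq_self h] at hneg
  exact self_eq_neg.mp hneg

/-- Two weights are `W_I`-conjugate if they lie in the same `W_I`-orbit. -/
def WeylConj (l l' : HStar V) : Prop := ∃ w ∈ weyl (PhiI S I), l' = wAct w l

variable {S I}

lemma WeylConj.refl (l : HStar V) : WeylConj S I l l := ⟨1, one_mem _, rfl⟩

lemma WeylConj.symm {l l' : HStar V} : WeylConj S I l l' → WeylConj S I l' l := by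
  rintro ⟨w, hw, h⟩
  exact ⟨w⁻¹, inv_mem hw, (wAct_inv_eq_iff.mpr h).symm⟩

lemma WeylConj.trans {l l' l'' : HStar V} :
    WeylConj S I l l' → WeylConj S I l' l'' → WeylConj S I l l'' := by
  rintro ⟨u, hu, rfl⟩ ⟨w, hw, rfl⟩
  exact ⟨w * u, mul_mem hw hu, (wAct_mul w u l).symm⟩

lemma weylConj_sRefl {α : V} (hα : α ∈ PhiI S I) (l : HStar V) : WeylConj S I l (sRefl α l) :=
  ⟨reflV α, reflV_mem_weyl hα, (wAct_reflV α l).symm⟩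

lemma weylConj_of_theta_apply_ne_zero {l ν : HStar V} (h : theta S I l ν ≠ 0) :
    WeylConj S I l ν := by
  contrapose! h
  rw [theta_eq_sum, Finsupp.finsetSum_apply]
  refine Finset.sum_eq_zero fun w hw => Finsupp.single_eq_of_ne fun hν => h ⟨w, ?_, hν⟩
  exact (weyl_finite S I).mem_toFinset.mp hw

lemma theta_ne_zero {l : HStar V} (hstab : ∀ w ∈ weyl (PhiI S I), wAct w l = l → w = 1) :
    theta S I l ≠ 0 := by
  suffices h : theta S I l l = 1 by
    intro h0
    simp [h0] at h
  rw [theta_eq_sum, Finsupp.finsetSum_apply, Finset.sum_eq_single 1]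
  · rw [wAct_one, len_one, pow_zero, Finsupp.single_eq_same]
  · intro w hw hne
    refine Finsupp.single_eq_of_ne fun h => hne (hstab w ?_ h.symm)
    exact (weyl_finite S I).mem_toFinset.mp hw
  · simp [one_mem]

theorem sum_theta_eq_zero_iff {ι : Type*} {P : Finset ι} {μ : ι → HStar V} :
    ∑ b ∈ P, theta S I (μ b) = 0 ↔
      ∀ b₀ ∈ P, ∑ b ∈ P with WeylConj S I (μ b) (μ b₀), theta S I (μ b) = 0 := by
  constructor
  · intro h b₀ _
    ext ν
    by_cases hν : WeylConj S I (μ b₀) ν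
    · rw [← h, Finsupp.finsetSum_apply, Finsupp.finsetSum_apply]
      refine Finset.sum_subset (Finset.filter_subset _ _) fun b hb hb' => ?_
      by_contra h0
      exact hb' (Finset.mem_filter.mpr
        ⟨hb, (weylConj_of_theta_apply_ne_zero h0).trans hν.symm⟩)
    · rw [Finsupp.finsetSum_apply, Finsupp.zero_apply]
      refine Finset.sum_eq_zero fun b hb => ?_
      by_contra h0
      exact hν ((Finset.mem_filter.mp hb).2.symm.trans (weylConj_of_theta_apply_ne_zero h0))
  · intro h
    ext ν
    by_cases hν : ∃ b₀ ∈ P, WeylConj S I (μ b₀) ν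
    · obtain ⟨b₀, hb₀, hν⟩ := hν
      rw [← h b₀ hb₀, Finsupp.finsetSum_apply, Finsupp.finsetSum_apply]
      refine (Finset.sum_subset (Finset.filter_subset _ _) fun b hb hb' => ?_).symm
      by_contra h0
      exact hb' (Finset.mem_filter.mpr
        ⟨hb, (weylConj_of_theta_apply_ne_zero h0).trans hν.symm⟩)
    · rw [Finsupp.finsetSum_apply, Finsupp.zero_apply]
      refine Finset.sum_eq_zero fun b hb => ?_
      by_contra h0
      exact hν ⟨b, hb, weylConj_of_theta_apply_ne_zero h0⟩

end

/-! ### Coordinates on `ℝⁿ` -/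

local notation:max "ℝ^" n:max => EuclideanSpace ℝ (Fin n)

/-- The standard basis vector indexed by `Fin n`; it is `stdE n (i + 1)` in the 1-based indexing. -/
def basisVec {n : ℕ} (i : Fin n) : ℝ^n := EuclideanSpace.single i 1

local notation "𝐞" => basisVec

/-- The root `e_i - η e_j` of `B_n`, covering `e_i - e_j` and `e_i + e_j` by a sign `η`. -/
def longRoot {n : ℕ} (η : ℤˣ) (i j : Fin n) : ℝ^n := 𝐞 i - η • 𝐞 j

section

variable {n : ℕ} {i j : Fin n}

lemma longRoot_one (i j : Fin n) : longRoot 1 i j = 𝐞 i - 𝐞 j := by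
  rw [longRoot, one_smul]

lemma longRoot_neg_one (i j : Fin n) : longRoot (-1) i j = 𝐞 i + 𝐞 j := by
  rw [longRoot, Units.neg_smul, one_smul, sub_neg_eq_add]

lemma inner_basisVec (i j : Fin n) : ⟪𝐞 i, 𝐞 j⟫ = if i = j then (1 : ℝ) else 0 := by
  simp [basisVec, EuclideanSpace.inner_single_left]

lemma basisVec_apply (i j : Fin n) : 𝐞 i j = if j = i then (1 : ℝ) else 0 := by
  simp [basisVec]

lemma basisVec_injective : Function.Injective (basisVec (n := n)) := by
  intro i j h
  simpa [basisVec_apply] using congrArg (fun v : ℝ^n => v i) h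

lemma basisVec_ne_zero (i : Fin n) : 𝐞 i ≠ 0 := fun h => by
  simpa [basisVec_apply] using congrArg (fun v : ℝ^n => v i) h

lemma longRoot_neg_one_injective (i : Fin n) : Function.Injective (longRoot (-1) i) := by
  intro j j' h
  simpa [longRoot_neg_one, basisVec_injective.eq_iff] using h

lemma basisVec_ne_longRoot_neg_one (k i j : Fin n) : 𝐞 k ≠ longRoot (-1) i j := by
  intro h
  have hsum := congrArg (fun v : ℝ^n => ∑ k, v k) h
  simp [longRoot_neg_one, basisVec_apply, Finset.sum_add_distrib] at hsum

lemma hStar_ext {l l' : HStar ℝ^n} (h : ∀ k, l (𝐞 k) = l' (𝐞 k)) : l = l' :=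
  (EuclideanSpace.basisFun (Fin n) ℝ).toBasis.ext fun k => by simpa [basisVec] using h k

lemma linearEquiv_ext_basisVec {u w : ℝ^n ≃ₗ[ℝ] ℝ^n} (h : ∀ k, u (𝐞 k) = w (𝐞 k)) : u = w :=
  LinearEquiv.toLinearMap_injective <|
    (EuclideanSpace.basisFun (Fin n) ℝ).toBasis.ext fun k => by simpa [basisVec] using h k

lemma map_longRoot (l : HStar ℝ^n) (η : ℤˣ) (i j : Fin n) :
    l (longRoot η i j) = l (𝐞 i) - η • l (𝐞 j) := by
  rcases Int.units_eq_one_or η with rfl | rfl <;> simp [longRoot]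

lemma coroot_basisVec (i : Fin n) : coroot (𝐞 i) = (2 : ℝ) • 𝐞 i := by
  rw [coroot, inner_basisVec, if_pos rfl, div_one]

lemma coroot_longRoot (η : ℤˣ) (hij : i ≠ j) : coroot (longRoot η i j) = longRoot η i j := by
  have h2 : ⟪longRoot η i j, longRoot η i j⟫ = 2 := by
    rcases Int.units_eq_one_or η with rfl | rfl <;>
      simp only [longRoot_one, longRoot_neg_one, inner_sub_left, inner_sub_right, inner_add_left,
        inner_add_right, inner_basisVec, hij, hij.symm, if_true, if_false] <;> norm_num
  rw [coroot, h2, div_self two_ne_zero, one_smul]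

lemma reflV_basisVec (i k : Fin n) : reflV (𝐞 i) (𝐞 k) = if k = i then -𝐞 i else 𝐞 k := by
  split_ifs with h
  · rw [h, reflV_self (basisVec_ne_zero i)]
  · rw [reflV_apply, coroot_basisVec, real_inner_smul_right, inner_basisVec, if_neg h, mul_zero,
      zero_smul, sub_zero]

lemma reflV_longRoot (η : ℤˣ) (hij : i ≠ j) (k : Fin n) :
    reflV (longRoot η i j) (𝐞 k) =
      if k = i then η • 𝐞 j else if k = j then η • 𝐞 i else 𝐞 k := by
  rw [reflV_apply, coroot_longRoot η hij]
  rcases Int.units_eq_one_or η with rfl | rfl <;>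
    simp only [longRoot_one, longRoot_neg_one, inner_sub_right, inner_add_right, inner_basisVec] <;>
    split_ifs <;> simp_all

lemma sRefl_apply_basisVec (β : ℝ^n) (l : HStar ℝ^n) (k : Fin n) :
    sRefl β l (𝐞 k) = l (reflV β (𝐞 k)) := by
  rw [← wAct_reflV, wAct, LinearMap.comp_apply, LinearEquiv.coe_coe, reflV_symm_apply]

lemma sRefl_basisVec (i : Fin n) (l : HStar ℝ^n) (k : Fin n) :
    sRefl (𝐞 i) l (𝐞 k) = if k = i then -l (𝐞 i) else l (𝐞 k) := by
  rw [sRefl_apply_basisVec, reflV_basisVec, apply_ite l, map_neg]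

lemma sRefl_longRoot (η : ℤˣ) (hij : i ≠ j) (l : HStar ℝ^n) (k : Fin n) :
    sRefl (longRoot η i j) l (𝐞 k) =
      if k = i then η • l (𝐞 j) else if k = j then η • l (𝐞 i) else l (𝐞 k) := by
  have hη (v : ℝ^n) : l (η • v) = η • l v := by
    rw [Units.smul_def, map_zsmul, Units.smul_def]
  rw [sRefl_apply_basisVec, reflV_longRoot η hij, apply_ite l, apply_ite l, hη, hη]

end

/-! ### Parabolic subsystems of `B_n` -/

/-- The pair `(S, I)` is the root system `B_n` with the standard parabolic subset whose blocks are
the fibres of `blk`: the blocks `s < M` are of type `A`, and the last block `M` (possibly empty) is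
of type `B`. -/
structure IsBlockParabolic {n : ℕ} (S : RootSys ℝ^n) (I : Finset ℝ^n) (blk : Fin n → ℕ) (M : ℕ) :
    Prop where
  mem_Φ_iff : ∀ v, v ∈ S.Φ ↔ (∃ (ε : ℤˣ) (i : Fin n), v = ε • 𝐞 i) ∨
    ∃ (ε η : ℤˣ) (i j : Fin n), i ≠ j ∧ v = ε • longRoot η i j
  mem_pos_iff : ∀ v, v ∈ S.pos ↔ (∃ i, v = 𝐞 i) ∨ ∃ η i j, i < j ∧ v = longRoot η i j
  monotone : Monotone blk
  le : ∀ i, blk i ≤ M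
  mem_I_iff : ∀ v, v ∈ I ↔
    (∃ i j : Fin n, (j : ℕ) = i + 1 ∧ blk i = blk j ∧ v = longRoot 1 i j) ∨
      ∃ i : Fin n, (i : ℕ) + 1 = n ∧ blk i = M ∧ v = 𝐞 i

section

variable {n : ℕ} {S : RootSys ℝ^n} {I : Finset ℝ^n} {blk : Fin n → ℕ} {M : ℕ}

lemma sum_block_basisVec (blk : Fin n → ℕ) (s : ℕ) (i : Fin n) :
    ∑ k with blk k = s, 𝐞 i k = if blk i = s then (1 : ℝ) else 0 := by
  simp [basisVec_apply, Finset.sum_ite_eq']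

lemma sum_block_longRoot (blk : Fin n → ℕ) (s : ℕ) (η : ℤˣ) (i j : Fin n) :
    ∑ k with blk k = s, longRoot η i j k =
      (if blk i = s then 1 else 0) - ((η : ℤ) : ℝ) * if blk j = s then 1 else 0 := by
  rw [← sum_block_basisVec, ← sum_block_basisVec, Finset.mul_sum, ← Finset.sum_sub_distrib]
  rcases Int.units_eq_one_or η with rfl | rfl <;> simp [longRoot]

namespace IsBlockParabolic

variable (h : IsBlockParabolic S I blk M)
include h

lemma sum_block_eq_zero {v : ℝ^n} (hv : v ∈ Submodule.span ℤ (I : Set ℝ^n)) {s : ℕ}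
    (hs : s < M) : ∑ k with blk k = s, v k = 0 := by
  induction hv using Submodule.span_induction with
  | mem v hv =>
    rcases (h.mem_I_iff v).mp hv with ⟨i, j, -, hij, rfl⟩ | ⟨i, -, hi, rfl⟩
    · simp [sum_block_longRoot, hij]
    · simp [sum_block_basisVec, hi, hs.ne']
  | zero => simp
  | add v w _ _ hv hw => simp [Finset.sum_add_distrib, hv, hw]
  | smul c v _ hv => simp [← Finset.mul_sum, hv]

lemma longRoot_one_mem_span_of_le {i j : Fin n} (hij : i ≤ j) (hb : blk i = blk j) :
    longRoot 1 i j ∈ Submodule.span ℤ (I : Set ℝ^n) := by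
  obtain ⟨d, hd⟩ := Nat.exists_eq_add_of_le (Fin.le_def.mp hij)
  induction d generalizing j with
  | zero => simp [longRoot, Fin.ext (hd : (j : ℕ) = i)]
  | succ d ih =>
    let k : Fin n := ⟨i + d, by omega⟩
    have hik : i ≤ k := Fin.le_def.mpr (Nat.le_add_right _ _)
    have hkj : k ≤ j := Fin.le_def.mpr (by simp only [k]; omega)
    have hbk : blk i = blk k := (h.monotone hik).antisymm ((h.monotone hkj).trans_eq hb.symm)
    have hsimple : longRoot 1 k j ∈ Submodule.span ℤ (I : Set ℝ^n) :=
      Submodule.subset_span ((h.mem_I_iff _).mpr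
        (Or.inl ⟨k, j, by simp only [k]; omega, hbk.symm.trans hb, rfl⟩))
    convert add_mem (ih hik hbk rfl) hsimple using 1
    simp only [longRoot_one, sub_add_sub_cancel]

lemma longRoot_one_mem_span {i j : Fin n} (hb : blk i = blk j) :
    longRoot 1 i j ∈ Submodule.span ℤ (I : Set ℝ^n) := by
  rcases le_total i j with hij | hij
  · exact h.longRoot_one_mem_span_of_le hij hb
  · have hneg := neg_mem (h.longRoot_one_mem_span_of_le hij hb.symm)
    rwa [longRoot_one, neg_sub, ← longRoot_one] at hneg

lemma basisVec_mem_span_iff {i : Fin n} :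
    𝐞 i ∈ Submodule.span ℤ (I : Set ℝ^n) ↔ blk i = M := by
  constructor
  · intro hi
    by_contra hne
    simpa [sum_block_basisVec] using h.sum_block_eq_zero hi ((h.le i).lt_of_ne hne)
  · intro hi
    let last : Fin n := ⟨n - 1, by have := i.2; omega⟩
    have hle : i ≤ last := Fin.le_def.mpr (by simp only [last]; omega)
    have hlast : blk last = M := (h.le _).antisymm (hi.symm.trans_le (h.monotone hle))
    have hsimple : 𝐞 last ∈ Submodule.span ℤ (I : Set ℝ^n) := Submodule.subset_span
      ((h.mem_I_iff _).mpr (Or.inr ⟨last, Nat.sub_add_cancel i.pos, hlast, rfl⟩))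
    convert add_mem (h.longRoot_one_mem_span (hi.trans hlast.symm)) hsimple using 1
    rw [longRoot_one, sub_add_cancel]

lemma longRoot_mem_span_iff {η : ℤˣ} {i j : Fin n} :
    longRoot η i j ∈ Submodule.span ℤ (I : Set ℝ^n) ↔ blk i = blk j ∧ (η = 1 ∨ blk i = M) := by
  constructor
  · intro hmem
    have hη : ((η : ℤ) : ℝ) ≠ 0 := Int.cast_ne_zero.mpr η.ne_zero
    have hsum {s : ℕ} (hs : s < M) := (sum_block_longRoot blk s η i j).symm.trans
      (h.sum_block_eq_zero hmem hs)
    rcases (h.le i).lt_or_eq with hi | hi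
    · have hij : blk j = blk i := by
        by_contra hne
        simpa [hne] using hsum hi
      refine ⟨hij.symm, Or.inl ?_⟩
      rcases Int.units_eq_one_or η with hη | rfl
      · exact hη
      · have h2 := hsum hi
        norm_num [hij] at h2
    · refine ⟨?_, Or.inr hi⟩
      by_contra hne
      simpa [hne, hη] using hsum ((h.le j).lt_of_ne fun hj => hne (hi.trans hj.symm))
  · rintro ⟨hb, hη | hi⟩
    · exact hη ▸ h.longRoot_one_mem_span hb
    · have hj := h.basisVec_mem_span_iff.mpr (hb.symm.trans hi)
      exact sub_mem (h.basisVec_mem_span_iff.mpr hi) (zsmul_mem hj (η : ℤ))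

lemma basisVec_mem_PhiI_iff {i : Fin n} : 𝐞 i ∈ PhiI S I ↔ blk i = M :=
  (and_iff_right ((h.mem_Φ_iff _).mpr (Or.inl ⟨1, i, (one_smul _ _).symm⟩))).trans
    h.basisVec_mem_span_iff

lemma longRoot_mem_PhiI_iff {η : ℤˣ} {i j : Fin n} (hij : i ≠ j) :
    longRoot η i j ∈ PhiI S I ↔ blk i = blk j ∧ (η = 1 ∨ blk i = M) :=
  (and_iff_right ((h.mem_Φ_iff _).mpr (Or.inr ⟨1, η, i, j, hij, (one_smul _ _).symm⟩))).trans
    h.longRoot_mem_span_iff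

lemma reflV_cases_of_mem_PhiI {α : ℝ^n} (hα : α ∈ PhiI S I) :
    (∃ i, blk i = M ∧ reflV α = reflV (𝐞 i)) ∨
      ∃ η i j, i ≠ j ∧ blk i = blk j ∧ (η = 1 ∨ blk i = M) ∧
        reflV α = reflV (longRoot η i j) := by
  obtain ⟨hΦ, hspan⟩ := hα
  have hunit (ε : ℤˣ) (v : ℝ^n) : reflV (ε • v) = reflV v := by
    rcases Int.units_eq_one_or ε with rfl | rfl <;> simp [reflV_neg]
  have hspan_unit {ε : ℤˣ} {v : ℝ^n} (hv : ε • v ∈ Submodule.span ℤ (I : Set ℝ^n)) :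
      v ∈ Submodule.span ℤ (I : Set ℝ^n) := by
    rcases Int.units_eq_one_or ε with rfl | rfl <;> simpa using hv
  rcases (h.mem_Φ_iff α).mp hΦ with ⟨ε, i, rfl⟩ | ⟨ε, η, i, j, hij, rfl⟩
  · exact Or.inl ⟨i, h.basisVec_mem_span_iff.mp (hspan_unit hspan), hunit ε _⟩
  · obtain ⟨hb, hη⟩ := h.longRoot_mem_span_iff.mp (hspan_unit hspan)
    exact Or.inr ⟨η, i, j, hij, hb, hη, hunit ε _⟩

/-! ### `W_I` acts by block-preserving signed permutations -/

lemma exists_reflV_basisVec_eq {α : ℝ^n} (hα : α ∈ PhiI S I) (k : Fin n) :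
    ∃ (ε : ℤˣ) (k' : Fin n), blk k' = blk k ∧ (ε = 1 ∨ blk k = M) ∧
      reflV α (𝐞 k) = ε • 𝐞 k' := by
  rcases h.reflV_cases_of_mem_PhiI hα with ⟨i, hi, hα⟩ | ⟨η, i, j, hij, hb, hη, hα⟩
  · rw [hα, reflV_basisVec]
    split_ifs with hk
    · exact ⟨-1, i, by rw [hk], Or.inr (hk ▸ hi), by simp⟩
    · exact ⟨1, k, rfl, Or.inl rfl, (one_smul _ _).symm⟩
  · rw [hα, reflV_longRoot η hij]
    split_ifs with hk hk'
    · exact ⟨η, j, by rw [hk, hb], hk ▸ hη, rfl⟩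
    · exact ⟨η, i, by rw [hk', hb], hk' ▸ hb ▸ hη, rfl⟩
    · exact ⟨1, k, rfl, Or.inl rfl, (one_smul _ _).symm⟩

lemma exists_apply_basisVec_eq {w : ℝ^n ≃ₗ[ℝ] ℝ^n} (hw : w ∈ weyl (PhiI S I)) (k : Fin n) :
    ∃ (ε : ℤˣ) (k' : Fin n), blk k' = blk k ∧ (ε = 1 ∨ blk k = M) ∧ w (𝐞 k) = ε • 𝐞 k' := by
  refine weyl_induction (p := fun w => ∃ (ε : ℤˣ) (k' : Fin n), blk k' = blk k ∧
    (ε = 1 ∨ blk k = M) ∧ w (𝐞 k) = ε • 𝐞 k') ⟨1, k, rfl, Or.inl rfl, (one_smul _ _).symm⟩ ?_ hw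
  rintro α hα w ⟨ε, k₁, hb₁, hε, hw⟩
  obtain ⟨ε', k₂, hb₂, hε', hα⟩ := h.exists_reflV_basisVec_eq hα k₁
  refine ⟨ε * ε', k₂, hb₂.trans hb₁, ?_, ?_⟩
  · rw [hb₁] at hε'
    rcases hε with rfl | hM
    · rwa [one_mul]
    · exact Or.inr hM
  · rw [LinearEquiv.mul_apply, hw, Units.smul_def, map_zsmul, hα, ← Units.smul_def, smul_smul]

lemma eq_one_of_wAct_eq_self {l : HStar ℝ^n} (hreg : ∀ α ∈ PhiI S I, l α ≠ 0)
    {w : ℝ^n ≃ₗ[ℝ] ℝ^n} (hw : w ∈ weyl (PhiI S I)) (hfix : wAct w l = l) : w = 1 := by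
  refine linearEquiv_ext_basisVec fun k => ?_
  obtain ⟨ε, k', hb, hε, hwk⟩ := h.exists_apply_basisVec_eq hw k
  have hk : l (w (𝐞 k)) = l (𝐞 k) := calc
    l (w (𝐞 k)) = wAct w l (w (𝐞 k)) := by rw [hfix]
    _ = l (𝐞 k) := congrArg l (w.symm_apply_apply _)
  rw [hwk] at hk
  by_cases hkk : k' = k
  · subst hkk
    rcases Int.units_eq_one_or ε with rfl | rfl
    · rw [hwk, one_smul]
      rfl
    · rw [Units.neg_smul, one_smul, map_neg, neg_eq_self] at hk
      exact absurd hk (hreg _ (h.basisVec_mem_PhiI_iff.mpr (hε.resolve_left (by decide))))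
  · refine absurd ?_ (hreg (longRoot ε k k') ((h.longRoot_mem_PhiI_iff (Ne.symm hkk)).mpr
      ⟨hb.symm, hε⟩))
    rw [longRoot, map_sub, hk, sub_self]

lemma theta_eq_zero_iff {l : HStar ℝ^n} : theta S I l = 0 ↔ ∃ α ∈ PhiI S I, l α = 0 := by
  constructor
  · contrapose!
    exact fun hreg => theta_ne_zero fun w hw => h.eq_one_of_wAct_eq_self hreg hw
  · rintro ⟨α, hα, h0⟩
    exact theta_eq_zero_of_apply_eq_zero S I hα h0

end IsBlockParabolic

end

/-! ### Block power sums -/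

section

variable {n : ℕ}

/-- The power sum `∑ λ_k ^ p` of the coordinates of a weight in the block `s`; these are the
`W_I`-invariants separating the weights `s_β λ`. -/
def blockPowerSum (blk : Fin n → ℕ) (l : HStar ℝ^n) (p s : ℕ) : ℂ :=
  ∑ k with blk k = s, l (𝐞 k) ^ p

/-- The change of the block power sums of `l` under the reflection `s_β`. -/
def powerSumChange (blk : Fin n → ℕ) (l : HStar ℝ^n) (β : ℝ^n) (p s : ℕ) : ℂ :=
  blockPowerSum blk (sRefl β l) p s - blockPowerSum blk l p s

lemma powerSumChange_basisVec (blk : Fin n → ℕ) (l : HStar ℝ^n) (i : Fin n) (p s : ℕ) :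
    powerSumChange blk l (𝐞 i) p s =
      if blk i = s then (-l (𝐞 i)) ^ p - l (𝐞 i) ^ p else 0 := by
  rw [powerSumChange, blockPowerSum, blockPowerSum, ← Finset.sum_sub_distrib, Finset.sum_filter]
  simp only [sRefl_basisVec]
  rw [Finset.sum_eq_single i (fun k _ hk => by simp [hk]) (by simp), if_pos rfl]

lemma powerSumChange_longRoot (blk : Fin n → ℕ) (l : HStar ℝ^n) (η : ℤˣ) {i j : Fin n}
    (hij : i ≠ j) (p s : ℕ) :
    powerSumChange blk l (longRoot η i j) p s =
      (if blk i = s then (η • l (𝐞 j)) ^ p - l (𝐞 i) ^ p else 0) +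
        if blk j = s then (η • l (𝐞 i)) ^ p - l (𝐞 j) ^ p else 0 := by
  rw [powerSumChange, blockPowerSum, blockPowerSum, ← Finset.sum_sub_distrib, Finset.sum_filter]
  simp only [sRefl_longRoot η hij]
  rw [Fintype.sum_eq_add i j hij fun k hk => by simp [hk.1, hk.2]]
  simp only [if_true, if_neg hij.symm]

variable {S : RootSys ℝ^n} {I : Finset ℝ^n} {blk : Fin n → ℕ} {M : ℕ}

lemma IsBlockParabolic.powerSumChange_eq_zero (h : IsBlockParabolic S I blk M) {α : ℝ^n}
    (hα : α ∈ PhiI S I) (l : HStar ℝ^n) (p : ℕ) {s : ℕ} (hs : s < M) :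
    powerSumChange blk l α p s = 0 := by
  have hcongr {β : ℝ^n} (hβ : reflV α = reflV β) :
      powerSumChange blk l α p s = powerSumChange blk l β p s := by
    rw [powerSumChange, powerSumChange, ← wAct_reflV, ← wAct_reflV, hβ]
  rcases h.reflV_cases_of_mem_PhiI hα with ⟨i, hi, hα⟩ | ⟨η, i, j, hij, hb, hη, hα⟩
  · rw [hcongr hα, powerSumChange_basisVec, hi, if_neg hs.ne']
  · rw [hcongr hα, powerSumChange_longRoot blk l η hij, ← hb]
    split_ifs with his
    · rw [hη.resolve_right (his ▸ hs.ne), one_smul, one_smul]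
      ring
    · exact add_zero 0

lemma IsBlockParabolic.blockPowerSum_wAct (h : IsBlockParabolic S I blk M)
    {w : ℝ^n ≃ₗ[ℝ] ℝ^n} (hw : w ∈ weyl (PhiI S I)) (l : HStar ℝ^n) (p : ℕ) {s : ℕ}
    (hs : s < M) : blockPowerSum blk (wAct w l) p s = blockPowerSum blk l p s := by
  refine weyl_induction (p := fun w => blockPowerSum blk (wAct w l) p s = blockPowerSum blk l p s)
    rfl (fun α hα w ih => ?_) hw
  rw [wAct_mul, wAct_reflV, ← ih]
  exact sub_eq_zero.mp (h.powerSumChange_eq_zero hα (wAct w l) p hs)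

lemma IsBlockParabolic.powerSumChange_eq_of_weylConj (h : IsBlockParabolic S I blk M)
    {l : HStar ℝ^n} {β β' : ℝ^n} (hconj : WeylConj S I (sRefl β l) (sRefl β' l)) (p : ℕ) {s : ℕ}
    (hs : s < M) : powerSumChange blk l β p s = powerSumChange blk l β' p s := by
  obtain ⟨w, hw, hβ'⟩ := hconj
  rw [powerSumChange, powerSumChange, hβ', h.blockPowerSum_wAct hw _ _ hs]

end

/-! ### Dominant weights -/

lemma IsPosInt.ne_zero {z : ℂ} (hz : IsPosInt z) : z ≠ 0 := by
  obtain ⟨k, hk, rfl⟩ := hz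
  exact Int.cast_ne_zero.mpr hk.ne'

lemma IsPosInt.add {z w : ℂ} (hz : IsPosInt z) (hw : IsPosInt w) : IsPosInt (z + w) := by
  obtain ⟨k, hk, rfl⟩ := hz
  obtain ⟨l, hl, rfl⟩ := hw
  exact ⟨k + l, add_pos hk hl, (Int.cast_add k l).symm⟩

lemma IsPosInt.not_neg {z : ℂ} (hz : IsPosInt z) : ¬IsPosInt (-z) := fun hneg =>
  (hz.add hneg).ne_zero (add_neg_cancel z)

section

variable {n : ℕ} {S : RootSys ℝ^n} {I : Finset ℝ^n} {blk : Fin n → ℕ} {M : ℕ} {lam : HStar ℝ^n}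

/-- The condition `λ ∈ Λ_I⁺` in coordinates, for the parabolic with blocks `blk` and last block
`M`: the coordinates decrease by positive integers along every block, and those in the last block
are positive half-integers. -/
structure IsBlockDominant (blk : Fin n → ℕ) (M : ℕ) (lam : HStar ℝ^n) : Prop where
  isPosInt_sub : ∀ {i j}, i < j → blk i = blk j → IsPosInt (lam (𝐞 i) - lam (𝐞 j))
  isPosInt_two_mul : ∀ {i}, blk i = M → IsPosInt (2 * lam (𝐞 i))

lemma IsBlockParabolic.isPosInt_sub_of_mem_LambdaP (h : IsBlockParabolic S I blk M)
    (hlam : lam ∈ LambdaP (I : Set ℝ^n)) {i j : Fin n} (hij : i < j) (hb : blk i = blk j) :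
    IsPosInt (lam (𝐞 i) - lam (𝐞 j)) := by
  have hstep {k j : Fin n} (hkj : (j : ℕ) = k + 1) (hb : blk k = blk j) :
      IsPosInt (lam (𝐞 k) - lam (𝐞 j)) := by
    have hk := hlam _ ((h.mem_I_iff _).mpr (Or.inl ⟨k, j, hkj, hb, rfl⟩))
    rwa [coroot_longRoot 1 (by rintro rfl; omega), longRoot_one, map_sub] at hk
  obtain ⟨d, hd⟩ := Nat.exists_eq_add_of_lt (Fin.lt_def.mp hij)
  induction d generalizing j with
  | zero => exact hstep hd hb
  | succ d ih =>
    let k : Fin n := ⟨i + d + 1, by omega⟩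
    have hik : i < k := Fin.lt_def.mpr (by simp only [k]; omega)
    have hkj : k < j := Fin.lt_def.mpr (by simp only [k]; omega)
    have hbk : blk i = blk k := (h.monotone hik.le).antisymm ((h.monotone hkj.le).trans_eq hb.symm)
    rw [← sub_add_sub_cancel _ (lam (𝐞 k))]
    exact (ih hik hbk rfl).add (hstep (by simp only [k]; omega) (hbk.symm.trans hb))

lemma IsBlockParabolic.isBlockDominant (h : IsBlockParabolic S I blk M)
    (hlam : lam ∈ LambdaP (I : Set ℝ^n)) : IsBlockDominant blk M lam := by
  refine ⟨h.isPosInt_sub_of_mem_LambdaP hlam, fun {i} hi => ?_⟩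
  let last : Fin n := ⟨n - 1, Nat.sub_lt i.pos Nat.one_pos⟩
  have hle : i ≤ last := Fin.le_def.mpr (Nat.le_sub_one_of_lt i.2)
  have hb : blk last = M := (h.le _).antisymm (hi.symm.trans_le (h.monotone hle))
  have hlast : IsPosInt (2 * lam (𝐞 last)) := by
    have hmem := hlam _ ((h.mem_I_iff _).mpr (Or.inr ⟨last, Nat.sub_add_cancel i.pos, hb, rfl⟩))
    rwa [coroot_basisVec, map_smul, Complex.real_smul] at hmem
  rcases hle.eq_or_lt with heq | hlt
  · rwa [heq]
  · have hsub := h.isPosInt_sub_of_mem_LambdaP hlam hlt (hi.trans hb.symm)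
    convert (hsub.add hsub).add hlast using 1
    ring

namespace IsBlockDominant

variable (hd : IsBlockDominant blk M lam)
include hd

lemma eq_of_apply_eq {i j : Fin n} (hb : blk i = blk j) (hij : lam (𝐞 i) = lam (𝐞 j)) : i = j := by
  rcases lt_trichotomy i j with hlt | heq | hlt
  · exact absurd (sub_eq_zero.mpr hij) (hd.isPosInt_sub hlt hb).ne_zero
  · exact heq
  · exact absurd (sub_eq_zero.mpr hij.symm) (hd.isPosInt_sub hlt hb.symm).ne_zero

lemma unit_smul_apply_injective {η η' : ℤˣ} {i j : Fin n} (hi : blk i = M) (hj : blk j = M)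
    (hij : η • lam (𝐞 i) = η' • lam (𝐞 j)) : η = η' ∧ i = j := by
  have hne : lam (𝐞 i) ≠ -lam (𝐞 j) := fun h => (hd.isPosInt_two_mul hj).not_neg
    (by rw [← mul_neg, ← h]; exact hd.isPosInt_two_mul hi)
  rcases Int.units_eq_one_or η with rfl | rfl <;> rcases Int.units_eq_one_or η' with rfl | rfl <;>
    simp only [one_smul, Units.neg_smul, neg_eq_iff_eq_neg, neg_neg] at hij
  · exact ⟨rfl, hd.eq_of_apply_eq (hi.trans hj.symm) hij⟩
  · exact absurd hij hne
  · exact absurd hij hne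
  · exact ⟨rfl, hd.eq_of_apply_eq (hi.trans hj.symm) hij⟩

end IsBlockDominant

end

/-! ### The four kinds of roots in `Ψ_λ⁺` -/

section

variable {n : ℕ} {S : RootSys ℝ^n} {I : Finset ℝ^n} {blk : Fin n → ℕ} {M : ℕ} {lam : HStar ℝ^n}

/-- The index `j` is a mate of `i` if `s_{e_i + e_j} λ` and `s_{e_i} λ` differ by a reflection in
`W_I`: either `j` lies in the block of `i` and `λ_j = 0`, or `j` lies in the last block and
`λ_j = λ_i`. -/
structure IsMate (blk : Fin n → ℕ) (M : ℕ) (lam : HStar ℝ^n) (i j : Fin n) : Prop where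
  ne : i ≠ j
  eq : (blk j = blk i ∧ lam (𝐞 j) = 0) ∨ (blk j = M ∧ lam (𝐞 j) = lam (𝐞 i))

/-- The root `β` is `e_i` or `e_i + e_j` with `j` a mate of `i`, so that `s_β` acts on `λ`, up to
`W_I`, by changing the sign of `λ_i`. -/
structure IsSignChange (blk : Fin n → ℕ) (M : ℕ) (lam : HStar ℝ^n) (i : Fin n) (β : ℝ^n) :
    Prop where
  lt : blk i < M
  isPosInt : IsPosInt (2 * lam (𝐞 i))
  eq : β = 𝐞 i ∨ ∃ j, IsMate blk M lam i j ∧ β = longRoot (-1) i j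

/-- The reflection in `β = e_i - η e_j` exchanges the coordinate `λ_i` with a coordinate `λ_j` of
the last block that differs from `± λ_i`. -/
structure IsTailExchange (blk : Fin n → ℕ) (M : ℕ) (lam : HStar ℝ^n) (η : ℤˣ) (i j : Fin n)
    (β : ℝ^n) : Prop where
  lt : blk i < M
  blk_eq : blk j = M
  eq : β = longRoot η i j
  sub_ne_zero : lam (𝐞 i) - η • lam (𝐞 j) ≠ 0
  add_ne_zero : lam (𝐞 i) + η • lam (𝐞 j) ≠ 0

/-- The reflection in `β = e_i + e_j` negates and exchanges two nonzero coordinates of one block,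
not the last one. -/
structure IsDoubleSignChange (blk : Fin n → ℕ) (M : ℕ) (lam : HStar ℝ^n) (i j : Fin n)
    (β : ℝ^n) : Prop where
  index_lt : i < j
  lt : blk i < M
  blk_eq : blk j = blk i
  eq : β = longRoot (-1) i j
  left_ne_zero : lam (𝐞 i) ≠ 0
  right_ne_zero : lam (𝐞 j) ≠ 0
  add_ne_zero : lam (𝐞 i) + lam (𝐞 j) ≠ 0

/-- The reflection in `β = e_i - η e_j` exchanges coordinates of two different blocks, neither of
them the last one. -/
structure IsBlockExchange (blk : Fin n → ℕ) (M : ℕ) (lam : HStar ℝ^n) (η : ℤˣ) (i j : Fin n)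
    (β : ℝ^n) : Prop where
  blk_lt : blk i < blk j
  lt : blk j < M
  eq : β = longRoot η i j
  sub_ne_zero : lam (𝐞 i) - η • lam (𝐞 j) ≠ 0

/-- One of the four kinds of roots occurring in `Ψ_λ⁺`. -/
inductive HasKind (blk : Fin n → ℕ) (M : ℕ) (lam : HStar ℝ^n) (β : ℝ^n) : Prop
  | signChange {i} (hβ : IsSignChange blk M lam i β)
  | tailExchange {η i j} (hβ : IsTailExchange blk M lam η i j β)
  | doubleSignChange {i j} (hβ : IsDoubleSignChange blk M lam i j β)
  | blockExchange {η i j} (hβ : IsBlockExchange blk M lam η i j β)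

lemma IsBlockDominant.hasKind_longRoot_of_blk_eq_last (hd : IsBlockDominant blk M lam) {η : ℤˣ}
    {i j : Fin n} (hij : i ≠ j) (hi : blk i < M) (hj : blk j = M)
    (hpos : IsPosInt (lam (𝐞 i) - η • lam (𝐞 j))) : HasKind blk M lam (longRoot η i j) := by
  by_cases hadd : lam (𝐞 i) + η • lam (𝐞 j) = 0
  · rcases Int.units_eq_one_or η with rfl | rfl
    · rw [one_smul] at hpos hadd
      refine absurd ?_ (hd.isPosInt_two_mul hj).not_neg
      rwa [eq_neg_of_add_eq_zero_left hadd, ← neg_add', ← two_mul] at hpos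
    · rw [Units.neg_smul, one_smul, ← sub_eq_add_neg, sub_eq_zero] at hadd
      exact .signChange ⟨hi, hadd ▸ hd.isPosInt_two_mul hj,
        Or.inr ⟨j, ⟨hij, Or.inr ⟨hj, hadd.symm⟩⟩, rfl⟩⟩
  · exact .tailExchange ⟨hi, hj, rfl, hpos.ne_zero, hadd⟩

lemma IsBlockDominant.hasKind_longRoot_neg_one_of_blk_eq (hd : IsBlockDominant blk M lam)
    {i j : Fin n} (hij : i < j) (hi : blk i < M) (hb : blk i = blk j)
    (hpos : IsPosInt (lam (𝐞 i) + lam (𝐞 j))) : HasKind blk M lam (longRoot (-1) i j) := by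
  by_cases hj0 : lam (𝐞 j) = 0
  · rw [hj0, add_zero] at hpos
    exact .signChange ⟨hi, two_mul (lam (𝐞 i)) ▸ hpos.add hpos,
      Or.inr ⟨j, ⟨hij.ne, Or.inl ⟨hb.symm, hj0⟩⟩, rfl⟩⟩
  · refine .doubleSignChange ⟨hij, hi, hb.symm, rfl, fun hi0 => ?_, hj0, hpos.ne_zero⟩
    have hsub := hd.isPosInt_sub hij hb
    rw [hi0, zero_sub] at hsub
    rw [hi0, zero_add] at hpos
    exact hpos.not_neg hsub

lemma IsBlockParabolic.hasKind_of_mem_PsiP (h : IsBlockParabolic S I blk M)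
    (hd : IsBlockDominant blk M lam) {β : ℝ^n} (hβ : β ∈ PsiP S (PhiI S I) (S.Φ : Set ℝ^n) lam) :
    HasKind blk M lam β := by
  obtain ⟨⟨-, hposβ⟩, hnot, hint⟩ := hβ
  rcases (h.mem_pos_iff β).mp hposβ with ⟨i, rfl⟩ | ⟨η, i, j, hij, rfl⟩
  · rw [h.basisVec_mem_PhiI_iff] at hnot
    rw [coroot_basisVec, map_smul, Complex.real_smul] at hint
    exact .signChange ⟨(h.le i).lt_of_ne hnot, by exact_mod_cast hint, Or.inl rfl⟩
  rw [h.longRoot_mem_PhiI_iff hij.ne, not_and_or, not_or] at hnot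
  rw [coroot_longRoot η hij.ne, map_longRoot] at hint
  rcases (h.monotone hij.le).lt_or_eq with hb | hb
  · rcases (h.le j).lt_or_eq with hj | hj
    · exact .blockExchange ⟨hb, hj, rfl, hint.ne_zero⟩
    · exact hd.hasKind_longRoot_of_blk_eq_last hij.ne (hj ▸ hb) hj hint
  · obtain ⟨hη, hi⟩ := hnot.resolve_left (not_not.mpr hb)
    obtain rfl := (Int.units_eq_one_or η).resolve_left hη
    rw [Units.neg_smul, one_smul, sub_neg_eq_add] at hint
    exact hd.hasKind_longRoot_neg_one_of_blk_eq hij ((h.le i).lt_of_ne hi) hb hint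

end

/-! ### Separation of the roots in `Ψ_λ⁺` by block power sums -/

section

variable {n : ℕ} {blk : Fin n → ℕ} {M : ℕ} {lam : HStar ℝ^n}

/-- The reflection `s_β` changes the block power sums of `l` only in the block `t`, where the
`p`-th one changes by `f p` and the first one really changes. -/
structure IsLocalChange (blk : Fin n → ℕ) (M : ℕ) (l : HStar ℝ^n) (β : ℝ^n) (t : ℕ)
    (f : ℕ → ℂ) : Prop where
  lt : t < M
  ne_zero : f 1 ≠ 0
  powerSumChange_eq : ∀ p {s}, s < M → powerSumChange blk l β p s = if t = s then f p else 0

lemma IsSignChange.apply_ne_zero {i : Fin n} {β : ℝ^n} (hβ : IsSignChange blk M lam i β) :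
    lam (𝐞 i) ≠ 0 :=
  right_ne_zero_of_mul hβ.isPosInt.ne_zero

lemma IsSignChange.isLocalChange {i : Fin n} {β : ℝ^n} (hβ : IsSignChange blk M lam i β) :
    IsLocalChange blk M lam β (blk i) fun p => (-lam (𝐞 i)) ^ p - lam (𝐞 i) ^ p where
  lt := hβ.lt
  ne_zero h0 := hβ.apply_ne_zero (by linear_combination (-1 / 2) * h0)
  powerSumChange_eq p s hs := by
    rcases hβ.eq with rfl | ⟨j, ⟨hij, ⟨hb, h0⟩ | ⟨hb, h0⟩⟩, rfl⟩
    · exact powerSumChange_basisVec ..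
    · rw [powerSumChange_longRoot blk lam _ hij, hb, h0]
      split_ifs <;> simp
    · rw [powerSumChange_longRoot blk lam _ hij, hb, h0, if_neg hs.ne']
      simp

lemma IsTailExchange.isLocalChange {η : ℤˣ} {i j : Fin n} {β : ℝ^n}
    (hβ : IsTailExchange blk M lam η i j β) :
    IsLocalChange blk M lam β (blk i) fun p => (η • lam (𝐞 j)) ^ p - lam (𝐞 i) ^ p where
  lt := hβ.lt
  ne_zero h0 := hβ.sub_ne_zero (by linear_combination -h0)
  powerSumChange_eq p s hs := by
    have hij : i ≠ j := fun hij => hβ.lt.ne (hij ▸ hβ.blk_eq)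
    rw [hβ.eq, powerSumChange_longRoot blk lam η hij, hβ.blk_eq, if_neg hs.ne', add_zero]

lemma IsDoubleSignChange.isLocalChange {i j : Fin n} {β : ℝ^n}
    (hβ : IsDoubleSignChange blk M lam i j β) :
    IsLocalChange blk M lam β (blk i) fun p =>
      (-lam (𝐞 j)) ^ p - lam (𝐞 i) ^ p + ((-lam (𝐞 i)) ^ p - lam (𝐞 j) ^ p) where
  lt := hβ.lt
  ne_zero h0 := hβ.add_ne_zero (by linear_combination (-1 / 2) * h0)
  powerSumChange_eq p s _ := by
    rw [hβ.eq, powerSumChange_longRoot blk lam _ hβ.index_lt.ne, hβ.blk_eq, ← ite_add_zero]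
    simp only [Units.neg_smul, one_smul]

lemma IsBlockExchange.powerSumChange_left {η : ℤˣ} {i j : Fin n} {β : ℝ^n}
    (hβ : IsBlockExchange blk M lam η i j β) (p : ℕ) :
    powerSumChange blk lam β p (blk i) = (η • lam (𝐞 j)) ^ p - lam (𝐞 i) ^ p := by
  rw [hβ.eq, powerSumChange_longRoot blk lam η (ne_of_apply_ne blk hβ.blk_lt.ne), if_pos rfl,
    if_neg hβ.blk_lt.ne', add_zero]

lemma IsBlockExchange.powerSumChange_right {η : ℤˣ} {i j : Fin n} {β : ℝ^n}
    (hβ : IsBlockExchange blk M lam η i j β) (p : ℕ) :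
    powerSumChange blk lam β p (blk j) = (η • lam (𝐞 i)) ^ p - lam (𝐞 j) ^ p := by
  rw [hβ.eq, powerSumChange_longRoot blk lam η (ne_of_apply_ne blk hβ.blk_lt.ne), if_pos rfl,
    if_neg hβ.blk_lt.ne, zero_add]

lemma IsBlockExchange.powerSumChange_one_ne_zero_iff {η : ℤˣ} {i j : Fin n} {β : ℝ^n}
    (hβ : IsBlockExchange blk M lam η i j β) {s : ℕ} :
    powerSumChange blk lam β 1 s ≠ 0 ↔ s = blk i ∨ s = blk j := by
  constructor
  · contrapose!
    rintro ⟨hi, hj⟩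
    rw [hβ.eq, powerSumChange_longRoot blk lam η (ne_of_apply_ne blk hβ.blk_lt.ne),
      if_neg hi.symm, if_neg hj.symm, add_zero]
  · have hne := hβ.sub_ne_zero
    rintro (rfl | rfl)
    · rw [hβ.powerSumChange_left, pow_one, pow_one]
      exact fun h0 => hne (by linear_combination -h0)
    · rw [hβ.powerSumChange_right, pow_one, pow_one]
      rcases Int.units_eq_one_or η with rfl | rfl <;>
        simp only [one_smul, Units.neg_smul] at hne ⊢ <;> intro h0
      · exact hne (by linear_combination h0)
      · exact hne (by linear_combination -h0)

lemma eq_and_eq_of_pow_sub_pow_eq {x y x' y' : ℂ} (hxy : x - y ≠ 0)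
    (h1 : y ^ 1 - x ^ 1 = y' ^ 1 - x' ^ 1) (h2 : y ^ 2 - x ^ 2 = y' ^ 2 - x' ^ 2) :
    x = x' ∧ y = y' := by
  have hadd : x + y = x' + y' := mul_left_cancel₀ hxy (by linear_combination (x' + y') * h1 - h2)
  exact ⟨by linear_combination (hadd - h1) / 2, by linear_combination (hadd + h1) / 2⟩

variable {S : RootSys ℝ^n} {I : Finset ℝ^n}

lemma IsLocalChange.eq_of_weylConj (h : IsBlockParabolic S I blk M) {β β' : ℝ^n} {t t' : ℕ}
    {f f' : ℕ → ℂ} (hβ : IsLocalChange blk M lam β t f) (hβ' : IsLocalChange blk M lam β' t' f')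
    (hconj : WeylConj S I (sRefl β lam) (sRefl β' lam)) : t' = t ∧ ∀ p, f p = f' p := by
  have hf (p : ℕ) : f p = if t' = t then f' p else 0 := calc
    f p = powerSumChange blk lam β p t := by rw [hβ.powerSumChange_eq p hβ.lt, if_pos rfl]
    _ = powerSumChange blk lam β' p t := h.powerSumChange_eq_of_weylConj hconj p hβ.lt
    _ = if t' = t then f' p else 0 := hβ'.powerSumChange_eq p hβ.lt
  have ht : t' = t := by
    by_contra hne
    exact hβ.ne_zero ((hf 1).trans (if_neg hne))
  exact ⟨ht, fun p => (hf p).trans (if_pos ht)⟩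

lemma IsBlockExchange.not_weylConj_of_isLocalChange (h : IsBlockParabolic S I blk M)
    {β β' : ℝ^n} {η : ℤˣ} {i j : Fin n} {t : ℕ} {f : ℕ → ℂ}
    (hβ : IsBlockExchange blk M lam η i j β) (hβ' : IsLocalChange blk M lam β' t f) :
    ¬WeylConj S I (sRefl β lam) (sRefl β' lam) := fun hconj => by
  have hblock {s : ℕ} (hs : s < M) (hsij : s = blk i ∨ s = blk j) : t = s := by
    have hne := hβ.powerSumChange_one_ne_zero_iff.mpr hsij
    rw [h.powerSumChange_eq_of_weylConj hconj 1 hs, hβ'.powerSumChange_eq 1 hs] at hne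
    exact (ite_ne_right_iff.mp hne).1
  exact hβ.blk_lt.ne
    ((hblock (hβ.blk_lt.trans hβ.lt) (Or.inl rfl)).symm.trans (hblock hβ.lt (Or.inr rfl)))

lemma IsSignChange.index_eq_of_weylConj (h : IsBlockParabolic S I blk M)
    (hd : IsBlockDominant blk M lam) {β β' : ℝ^n} {i i' : Fin n}
    (hβ : IsSignChange blk M lam i β) (hβ' : IsSignChange blk M lam i' β')
    (hconj : WeylConj S I (sRefl β lam) (sRefl β' lam)) : i = i' := by
  obtain ⟨hb, hf⟩ := hβ.isLocalChange.eq_of_weylConj h hβ'.isLocalChange hconj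
  exact hd.eq_of_apply_eq hb.symm (by linear_combination (-1 / 2) * hf 1)

lemma IsSignChange.not_weylConj_of_isTailExchange (h : IsBlockParabolic S I blk M)
    {β β' : ℝ^n} {η : ℤˣ} {i i' j' : Fin n} (hβ : IsSignChange blk M lam i β)
    (hβ' : IsTailExchange blk M lam η i' j' β') :
    ¬WeylConj S I (sRefl β lam) (sRefl β' lam) := fun hconj => by
  obtain ⟨-, hf⟩ := hβ.isLocalChange.eq_of_weylConj h hβ'.isLocalChange hconj
  exact mul_ne_zero hβ'.sub_ne_zero hβ'.add_ne_zero (by linear_combination hf 2)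

lemma IsSignChange.not_weylConj_of_isDoubleSignChange (h : IsBlockParabolic S I blk M)
    {β β' : ℝ^n} {i i' j' : Fin n} (hβ : IsSignChange blk M lam i β)
    (hβ' : IsDoubleSignChange blk M lam i' j' β') :
    ¬WeylConj S I (sRefl β lam) (sRefl β' lam) := fun hconj => by
  obtain ⟨-, hf⟩ := hβ.isLocalChange.eq_of_weylConj h hβ'.isLocalChange hconj
  have hadd : lam (𝐞 i) = lam (𝐞 i') + lam (𝐞 j') := by linear_combination (-1 / 2) * hf 1
  have hcube := hf 3
  rw [hadd] at hcube
  exact mul_ne_zero (mul_ne_zero hβ'.left_ne_zero hβ'.right_ne_zero) hβ'.add_ne_zero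
    (by linear_combination (-1 / 6) * hcube)

lemma IsTailExchange.not_weylConj_of_isDoubleSignChange (h : IsBlockParabolic S I blk M)
    {β β' : ℝ^n} {η : ℤˣ} {i j i' j' : Fin n} (hβ : IsTailExchange blk M lam η i j β)
    (hβ' : IsDoubleSignChange blk M lam i' j' β') :
    ¬WeylConj S I (sRefl β lam) (sRefl β' lam) := fun hconj => by
  obtain ⟨-, hf⟩ := hβ.isLocalChange.eq_of_weylConj h hβ'.isLocalChange hconj
  exact mul_ne_zero hβ.sub_ne_zero hβ.add_ne_zero (by linear_combination -hf 2)

lemma IsTailExchange.eq_of_weylConj (h : IsBlockParabolic S I blk M)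
    (hd : IsBlockDominant blk M lam) {β β' : ℝ^n} {η η' : ℤˣ} {i j i' j' : Fin n}
    (hβ : IsTailExchange blk M lam η i j β) (hβ' : IsTailExchange blk M lam η' i' j' β')
    (hconj : WeylConj S I (sRefl β lam) (sRefl β' lam)) : β = β' := by
  obtain ⟨hb, hf⟩ := hβ.isLocalChange.eq_of_weylConj h hβ'.isLocalChange hconj
  obtain ⟨hi, hj⟩ := eq_and_eq_of_pow_sub_pow_eq hβ.sub_ne_zero (hf 1) (hf 2)
  obtain ⟨rfl, rfl⟩ := hd.unit_smul_apply_injective hβ.blk_eq hβ'.blk_eq hj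
  rw [hβ.eq, hβ'.eq, hd.eq_of_apply_eq hb.symm hi]

lemma IsDoubleSignChange.eq_of_weylConj (h : IsBlockParabolic S I blk M)
    (hd : IsBlockDominant blk M lam) {β β' : ℝ^n} {i j i' j' : Fin n}
    (hβ : IsDoubleSignChange blk M lam i j β) (hβ' : IsDoubleSignChange blk M lam i' j' β')
    (hconj : WeylConj S I (sRefl β lam) (sRefl β' lam)) : β = β' := by
  obtain ⟨hb, hf⟩ := hβ.isLocalChange.eq_of_weylConj h hβ'.isLocalChange hconj
  have hj' : lam (𝐞 j') = lam (𝐞 i) + lam (𝐞 j) - lam (𝐞 i') := by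
    linear_combination (1 / 2) * hf 1
  have hcube := hf 3
  rw [hj'] at hcube
  have hroots : (lam (𝐞 i') - lam (𝐞 i)) * (lam (𝐞 i') - lam (𝐞 j)) = 0 :=
    mul_left_cancel₀ hβ.add_ne_zero (by linear_combination (1 / 6) * hcube)
  rcases mul_eq_zero.mp hroots with hi | hi
  · have hii : i' = i := hd.eq_of_apply_eq hb (sub_eq_zero.mp hi)
    have hjj : j' = j := hd.eq_of_apply_eq (hβ'.blk_eq.trans (hb.trans hβ.blk_eq.symm))
      (by linear_combination hj' - hi)
    rw [hβ.eq, hβ'.eq, hii, hjj]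
  · have hij : i' = j := hd.eq_of_apply_eq (hb.trans hβ.blk_eq.symm) (sub_eq_zero.mp hi)
    have hji : j' = i := hd.eq_of_apply_eq (hβ'.blk_eq.trans hb) (by linear_combination hj' - hi)
    exact absurd hβ.index_lt (hij ▸ hji ▸ hβ'.index_lt).asymm

lemma IsBlockExchange.blk_eq_of_weylConj (h : IsBlockParabolic S I blk M)
    {β β' : ℝ^n} {η η' : ℤˣ} {i j i' j' : Fin n}
    (hβ : IsBlockExchange blk M lam η i j β) (hβ' : IsBlockExchange blk M lam η' i' j' β')
    (hconj : WeylConj S I (sRefl β lam) (sRefl β' lam)) : blk i = blk i' ∧ blk j = blk j' := by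
  have hblocks {s : ℕ} (hs : s < M) : s = blk i ∨ s = blk j ↔ s = blk i' ∨ s = blk j' := by
    rw [← hβ.powerSumChange_one_ne_zero_iff, ← hβ'.powerSumChange_one_ne_zero_iff,
      h.powerSumChange_eq_of_weylConj hconj 1 hs]
  have hi := (hblocks (hβ.blk_lt.trans hβ.lt)).mp (Or.inl rfl)
  have hj := (hblocks hβ.lt).mp (Or.inr rfl)
  have := hβ.blk_lt
  have := hβ'.blk_lt
  omega

lemma IsBlockExchange.eq_of_weylConj (h : IsBlockParabolic S I blk M)
    (hd : IsBlockDominant blk M lam) {β β' : ℝ^n} {η η' : ℤˣ} {i j i' j' : Fin n}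
    (hβ : IsBlockExchange blk M lam η i j β) (hβ' : IsBlockExchange blk M lam η' i' j' β')
    (hconj : WeylConj S I (sRefl β lam) (sRefl β' lam)) : β = β' := by
  obtain ⟨hbi, hbj⟩ := hβ.blk_eq_of_weylConj h hβ' hconj
  have hleft (p : ℕ) : (η • lam (𝐞 j)) ^ p - lam (𝐞 i) ^ p =
      (η' • lam (𝐞 j')) ^ p - lam (𝐞 i') ^ p := by
    rw [← hβ.powerSumChange_left, ← hβ'.powerSumChange_left, ← hbi]
    exact h.powerSumChange_eq_of_weylConj hconj p (hβ.blk_lt.trans hβ.lt)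
  have hright : (η • lam (𝐞 i)) ^ 1 - lam (𝐞 j) ^ 1 = (η' • lam (𝐞 i')) ^ 1 - lam (𝐞 j') ^ 1 := by
    rw [← hβ.powerSumChange_right, ← hβ'.powerSumChange_right, ← hbj]
    exact h.powerSumChange_eq_of_weylConj hconj 1 hβ.lt
  obtain ⟨hi, hj⟩ := eq_and_eq_of_pow_sub_pow_eq hβ.sub_ne_zero (hleft 1) (hleft 2)
  obtain rfl := hd.eq_of_apply_eq hbi hi
  have hne := hβ.sub_ne_zero
  rcases Int.units_eq_one_or η with rfl | rfl <;> rcases Int.units_eq_one_or η' with rfl | rfl <;>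
    simp only [one_smul, Units.neg_smul] at hj hright hne
  · rw [hβ.eq, hβ'.eq, hd.eq_of_apply_eq hbj hj]
  · exact absurd (by linear_combination (hright - hj) / 2) hne
  · exact absurd (by linear_combination (-hright - hj) / 2) hne
  · rw [hβ.eq, hβ'.eq, hd.eq_of_apply_eq hbj (neg_inj.mp hj)]

lemma HasKind.eq_or_isSignChange_of_weylConj (h : IsBlockParabolic S I blk M)
    (hd : IsBlockDominant blk M lam) {β β' : ℝ^n} (hβ : HasKind blk M lam β)
    (hβ' : HasKind blk M lam β') (hconj : WeylConj S I (sRefl β lam) (sRefl β' lam)) :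
    β = β' ∨ ∃ i, IsSignChange blk M lam i β ∧ IsSignChange blk M lam i β' := by
  match hβ, hβ' with
  | .signChange hβ, .signChange hβ' =>
    exact Or.inr ⟨_, hβ, hβ.index_eq_of_weylConj h hd hβ' hconj ▸ hβ'⟩
  | .tailExchange hβ, .tailExchange hβ' => exact Or.inl (hβ.eq_of_weylConj h hd hβ' hconj)
  | .doubleSignChange hβ, .doubleSignChange hβ' =>
    exact Or.inl (hβ.eq_of_weylConj h hd hβ' hconj)
  | .blockExchange hβ, .blockExchange hβ' => exact Or.inl (hβ.eq_of_weylConj h hd hβ' hconj)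
  | .signChange hβ, .tailExchange hβ' =>
    exact absurd hconj (hβ.not_weylConj_of_isTailExchange h hβ')
  | .tailExchange hβ, .signChange hβ' =>
    exact absurd hconj.symm (hβ'.not_weylConj_of_isTailExchange h hβ)
  | .signChange hβ, .doubleSignChange hβ' | .tailExchange hβ, .doubleSignChange hβ' =>
    exact absurd hconj (hβ.not_weylConj_of_isDoubleSignChange h hβ')
  | .doubleSignChange hβ, .signChange hβ' | .doubleSignChange hβ, .tailExchange hβ' =>
    exact absurd hconj.symm (hβ'.not_weylConj_of_isDoubleSignChange h hβ)
  | .blockExchange hβ, .signChange hβ' | .blockExchange hβ, .tailExchange hβ'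
  | .blockExchange hβ, .doubleSignChange hβ' =>
    exact absurd hconj (hβ.not_weylConj_of_isLocalChange h hβ'.isLocalChange)
  | .signChange hβ, .blockExchange hβ' | .tailExchange hβ, .blockExchange hβ'
  | .doubleSignChange hβ, .blockExchange hβ' =>
    exact absurd hconj.symm (hβ'.not_weylConj_of_isLocalChange h hβ.isLocalChange)

end

/-! ### Vanishing of the Jantzen sum -/

section

variable {n : ℕ} {S : RootSys ℝ^n} {I : Finset ℝ^n} {blk : Fin n → ℕ} {M : ℕ} {lam : HStar ℝ^n}

lemma IsBlockParabolic.exists_sRefl_longRoot_eq (h : IsBlockParabolic S I blk M) {i j : Fin n}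
    (hij : IsMate blk M lam i j) :
    ∃ α ∈ PhiI S I, sRefl (longRoot (-1) i j) lam = sRefl α (sRefl (𝐞 i) lam) := by
  obtain ⟨hne, ⟨hb, h0⟩ | ⟨hb, h0⟩⟩ := hij
  · refine ⟨longRoot 1 i j, (h.longRoot_mem_PhiI_iff hne).mpr ⟨hb.symm, Or.inl rfl⟩,
      hStar_ext fun k => ?_⟩
    simp only [sRefl_longRoot _ hne, sRefl_basisVec, hne.symm, h0]
    split_ifs <;> simp_all
  · refine ⟨𝐞 j, h.basisVec_mem_PhiI_iff.mpr hb, hStar_ext fun k => ?_⟩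
    simp only [sRefl_longRoot _ hne, sRefl_basisVec, hne.symm, h0]
    split_ifs <;> simp_all

lemma IsBlockParabolic.theta_sRefl_longRoot (h : IsBlockParabolic S I blk M) {i j : Fin n}
    (hij : IsMate blk M lam i j) :
    theta S I (sRefl (longRoot (-1) i j) lam) = -theta S I (sRefl (𝐞 i) lam) := by
  obtain ⟨α, hα, heq⟩ := h.exists_sRefl_longRoot_eq hij
  rw [heq, theta_sRefl S I hα]

lemma IsMate.longRoot_mem_pos (h : IsBlockParabolic S I blk M) {i j : Fin n}
    (hij : IsMate blk M lam i j) : longRoot (-1) i j ∈ S.pos := by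
  refine (h.mem_pos_iff _).mpr (Or.inr ?_)
  rcases lt_or_gt_of_ne hij.ne with hlt | hlt
  · exact ⟨-1, i, j, hlt, rfl⟩
  · exact ⟨-1, j, i, hlt, by rw [longRoot_neg_one, longRoot_neg_one, add_comm]⟩

lemma IsMate.isPosInt_add (hd : IsBlockDominant blk M lam) {i j : Fin n}
    (hij : IsMate blk M lam i j) (hi : IsPosInt (2 * lam (𝐞 i))) :
    IsPosInt (lam (𝐞 i) + lam (𝐞 j)) := by
  obtain ⟨hne, ⟨hb, h0⟩ | ⟨-, h0⟩⟩ := hij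
  · rcases lt_or_gt_of_ne hne with hlt | hlt
    · simpa [h0] using hd.isPosInt_sub hlt hb.symm
    · have hneg := hd.isPosInt_sub hlt hb
      rw [h0, zero_sub] at hneg
      exact absurd (by simpa [two_mul, add_comm] using hneg.add hneg) hi.not_neg
  · rwa [h0, ← two_mul]

namespace IsSignChange

variable {β β' : ℝ^n} {i : Fin n}

lemma mem_PsiP (h : IsBlockParabolic S I blk M) (hd : IsBlockDominant blk M lam)
    (hβ : IsSignChange blk M lam i β) : β ∈ PsiP S (PhiI S I) (S.Φ : Set ℝ^n) lam := by
  have hpos {β : ℝ^n} (hβ : β ∈ S.pos) : β ∈ (S.Φ : Set ℝ^n) ∩ (S.pos : Set ℝ^n) :=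
    ⟨S.pos_subset hβ, hβ⟩
  rcases hβ.eq with rfl | ⟨j, hij, rfl⟩
  · refine ⟨hpos ((h.mem_pos_iff _).mpr (Or.inl ⟨i, rfl⟩)),
      fun hmem => hβ.lt.ne (h.basisVec_mem_PhiI_iff.mp hmem), ?_⟩
    simpa [coroot_basisVec] using hβ.isPosInt
  · refine ⟨hpos (hij.longRoot_mem_pos h), fun hmem => hβ.lt.ne
      (((h.longRoot_mem_PhiI_iff hij.ne).mp hmem).2.resolve_left (by decide)), ?_⟩
    rw [coroot_longRoot _ hij.ne, longRoot_neg_one, map_add]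
    exact hij.isPosInt_add hd hβ.isPosInt

lemma weylConj_basisVec (h : IsBlockParabolic S I blk M) (hβ : IsSignChange blk M lam i β) :
    WeylConj S I (sRefl (𝐞 i) lam) (sRefl β lam) := by
  rcases hβ.eq with rfl | ⟨j, hij, rfl⟩
  · exact .refl _
  · obtain ⟨α, hα, heq⟩ := h.exists_sRefl_longRoot_eq hij
    exact heq ▸ weylConj_sRefl hα _

lemma theta_eq_zero_iff (h : IsBlockParabolic S I blk M) (hβ : IsSignChange blk M lam i β) :
    theta S I (sRefl β lam) = 0 ↔ theta S I (sRefl (𝐞 i) lam) = 0 := by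
  rcases hβ.eq with rfl | ⟨j, hij, rfl⟩
  · rfl
  · rw [h.theta_sRefl_longRoot hij, neg_eq_zero]

lemma weylConj_iff (h : IsBlockParabolic S I blk M) (hd : IsBlockDominant blk M lam)
    (hβ : IsSignChange blk M lam i β) (hβ' : β' ∈ PsiP S (PhiI S I) (S.Φ : Set ℝ^n) lam) :
    WeylConj S I (sRefl β' lam) (sRefl β lam) ↔ IsSignChange blk M lam i β' := by
  constructor
  · intro hconj
    rcases (h.hasKind_of_mem_PsiP hd hβ').eq_or_isSignChange_of_weylConj h hd (.signChange hβ)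
      hconj with rfl | ⟨i', hβi', hβi⟩
    · exact hβ
    · rwa [← hβi.index_eq_of_weylConj h hd hβ (.refl _)]
  · exact fun hβ' => (hβ'.weylConj_basisVec h).symm.trans (hβ.weylConj_basisVec h)

end IsSignChange

/-- The finite set of mates of `i`. -/
def mates (blk : Fin n → ℕ) (M : ℕ) (lam : HStar ℝ^n) (i : Fin n) : Finset (Fin n) :=
  {j | IsMate blk M lam i j}

/-- The set `Ψ_λ⁺` as a finite set. -/
def psiFinset (S : RootSys ℝ^n) (I : Finset ℝ^n) (lam : HStar ℝ^n) : Finset ℝ^n :=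
  {β ∈ S.pos | β ∈ PsiP S (PhiI S I) (S.Φ : Set ℝ^n) lam}

lemma mem_psiFinset {β : ℝ^n} :
    β ∈ psiFinset S I lam ↔ β ∈ PsiP S (PhiI S I) (S.Φ : Set ℝ^n) lam :=
  Finset.mem_filter.trans (and_iff_right_of_imp fun hβ => hβ.1.2)

lemma IsSignChange.filter_weylConj_eq (h : IsBlockParabolic S I blk M)
    (hd : IsBlockDominant blk M lam) {β : ℝ^n} {i : Fin n} (hβ : IsSignChange blk M lam i β) :
    {β' ∈ psiFinset S I lam | WeylConj S I (sRefl β' lam) (sRefl β lam)} =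
      insert (𝐞 i) ((mates blk M lam i).image (longRoot (-1) i)) := by
  have hclass (β' : ℝ^n) : β' ∈ ({β' ∈ psiFinset S I lam |
      WeylConj S I (sRefl β' lam) (sRefl β lam)} : Finset ℝ^n) ↔ IsSignChange blk M lam i β' := by
    rw [Finset.mem_filter, mem_psiFinset]
    exact ⟨fun hβ' => (hβ.weylConj_iff h hd hβ'.1).mp hβ'.2,
      fun hβ' => ⟨hβ'.mem_PsiP h hd, (hβ.weylConj_iff h hd (hβ'.mem_PsiP h hd)).mpr hβ'⟩⟩
  ext β'
  simp only [hclass, mates, Finset.mem_insert, Finset.mem_image, Finset.mem_filter,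
    Finset.mem_univ, true_and, @eq_comm _ _ β']
  exact ⟨IsSignChange.eq, IsSignChange.mk hβ.lt hβ.isPosInt⟩

lemma IsSignChange.sum_theta_filter_weylConj (h : IsBlockParabolic S I blk M)
    (hd : IsBlockDominant blk M lam) {β : ℝ^n} {i : Fin n} (hβ : IsSignChange blk M lam i β) :
    ∑ β' ∈ psiFinset S I lam with WeylConj S I (sRefl β' lam) (sRefl β lam),
        theta S I (sRefl β' lam) =
      (1 - ((mates blk M lam i).card : ℤ)) • theta S I (sRefl (𝐞 i) lam) := by
  have hnot : 𝐞 i ∉ (mates blk M lam i).image (longRoot (-1) i) := by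
    simp [(basisVec_ne_longRoot_neg_one i i _).symm]
  have hmates : ∑ j ∈ mates blk M lam i, theta S I (sRefl (longRoot (-1) i j) lam) =
      ∑ _j ∈ mates blk M lam i, -theta S I (sRefl (𝐞 i) lam) :=
    Finset.sum_congr rfl fun j hj => h.theta_sRefl_longRoot (Finset.mem_filter.mp hj).2
  rw [hβ.filter_weylConj_eq h hd, Finset.sum_insert hnot,
    Finset.sum_image (longRoot_neg_one_injective i).injOn, hmates, Finset.sum_const, smul_neg,
    sub_smul, one_smul, natCast_zsmul, sub_eq_add_neg]

lemma IsBlockParabolic.mem_PsiPP_iff (h : IsBlockParabolic S I blk M) {β : ℝ^n} :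
    β ∈ PsiPP S (PhiI S I) (S.Φ : Set ℝ^n) lam ↔
      β ∈ PsiP S (PhiI S I) (S.Φ : Set ℝ^n) lam ∧ theta S I (sRefl β lam) ≠ 0 := by
  refine and_congr_right fun _ => ?_
  rw [ne_eq, h.theta_eq_zero_iff]
  push Not
  rfl

lemma IsBlockParabolic.sum_theta_filter_weylConj_eq_zero_iff (h : IsBlockParabolic S I blk M)
    (hd : IsBlockDominant blk M lam) {β : ℝ^n}
    (hβ : β ∈ PsiP S (PhiI S I) (S.Φ : Set ℝ^n) lam) :
    ∑ β' ∈ psiFinset S I lam with WeylConj S I (sRefl β' lam) (sRefl β lam),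
        theta S I (sRefl β' lam) = 0 ↔
      (theta S I (sRefl β lam) ≠ 0 →
        ∃ i, IsSignChange blk M lam i β ∧ ∃! j, IsMate blk M lam i j) := by
  by_cases hsc : ∃ i, IsSignChange blk M lam i β
  · obtain ⟨i, hi⟩ := hsc
    have hunique : (∃ i, IsSignChange blk M lam i β ∧ ∃! j, IsMate blk M lam i j) ↔
        (mates blk M lam i).card = 1 := by
      rw [mates, ← Fintype.existsUnique_iff_card_one]
      refine ⟨fun ⟨i', hi', hj⟩ => ?_, fun hj => ⟨i, hi, hj⟩⟩
      rwa [hi.index_eq_of_weylConj h hd hi' (.refl _)]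
    rw [hi.sum_theta_filter_weylConj h hd, smul_eq_zero, hunique, ne_eq, hi.theta_eq_zero_iff h]
    have hcard : 1 - ((mates blk M lam i).card : ℤ) = 0 ↔ (mates blk M lam i).card = 1 := by omega
    rw [hcard]
    tauto
  · have hclass : ({β' ∈ psiFinset S I lam | WeylConj S I (sRefl β' lam) (sRefl β lam)} :
        Finset ℝ^n) = {β} := by
      ext β'
      rw [Finset.mem_filter, mem_psiFinset, Finset.mem_singleton]
      refine ⟨fun ⟨hβ', hconj⟩ => ?_, fun heq => heq ▸ ⟨heq ▸ hβ, .refl _⟩⟩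
      exact ((h.hasKind_of_mem_PsiP hd hβ').eq_or_isSignChange_of_weylConj h hd
        (h.hasKind_of_mem_PsiP hd hβ) hconj).resolve_right fun ⟨i, _, hi⟩ => hsc ⟨i, hi⟩
    rw [hclass, Finset.sum_singleton]
    have hnone : ¬∃ i, IsSignChange blk M lam i β ∧ ∃! j, IsMate blk M lam i j :=
      fun ⟨i, hi, _⟩ => hsc ⟨i, hi⟩
    exact ⟨absurd, fun himp => by_contra fun h0 => hnone (himp h0)⟩

theorem IsBlockParabolic.finsum_theta_eq_zero_iff (h : IsBlockParabolic S I blk M)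
    (hd : IsBlockDominant blk M lam) :
    ∑ᶠ β ∈ PsiP S (PhiI S I) (S.Φ : Set ℝ^n) lam, theta S I (sRefl β lam) = 0 ↔
      ∀ β ∈ PsiPP S (PhiI S I) (S.Φ : Set ℝ^n) lam,
        ∃ i, IsSignChange blk M lam i β ∧ ∃! j, IsMate blk M lam i j := by
  rw [← finsum_mem_congr (Set.ext fun _ => mem_psiFinset) fun _ _ => rfl, finsum_mem_coe_finset,
    sum_theta_eq_zero_iff]
  simp only [h.mem_PsiPP_iff, and_imp, mem_psiFinset]
  exact forall₂_congr fun β hβ => h.sum_theta_filter_weylConj_eq_zero_iff hd hβ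

end

/-! ### The two forms of roots that cancel -/

section

variable {n : ℕ} {S : RootSys ℝ^n} {I : Finset ℝ^n} {blk : Fin n → ℕ} {M : ℕ} {lam : HStar ℝ^n}

/-- Form (1) of the theorem in terms of blocks: the only mate `j` of `i` lies in the last block. -/
structure IsTailForm (blk : Fin n → ℕ) (M : ℕ) (lam : HStar ℝ^n) (i j : Fin n) (β : ℝ^n) :
    Prop where
  lt : blk i < M
  blk_eq : blk j = M
  eq : β = 𝐞 i ∨ β = 𝐞 i + 𝐞 j
  isPosInt : IsPosInt (2 * lam (𝐞 i))
  apply_eq : lam (𝐞 j) = lam (𝐞 i)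
  apply_ne : ∀ k, blk k = blk i → lam (𝐞 k) ≠ 0 ∧ lam (𝐞 k) ≠ -lam (𝐞 i)

/-- Form (2) of the theorem in terms of blocks: the only mate `j` of `i` lies in the block of
`i`. -/
structure IsZeroForm (blk : Fin n → ℕ) (M : ℕ) (lam : HStar ℝ^n) (i j : Fin n) (β : ℝ^n) :
    Prop where
  index_lt : i < j
  lt : blk i < M
  blk_eq : blk j = blk i
  eq : β = 𝐞 i ∨ β = 𝐞 i + 𝐞 j
  isPosInt : IsPosInt (lam (𝐞 i))
  apply_eq : lam (𝐞 j) = 0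
  apply_ne_neg : ∀ k, blk k = blk i → lam (𝐞 k) ≠ -lam (𝐞 i)
  apply_ne : ∀ l, blk l = M → lam (𝐞 l) ≠ lam (𝐞 i)

variable {i j : Fin n} {β : ℝ^n}

lemma IsMate.isSignChange (hij : IsMate blk M lam i j) (hi : blk i < M)
    (hpos : IsPosInt (2 * lam (𝐞 i))) (hβ : β = 𝐞 i ∨ β = 𝐞 i + 𝐞 j) :
    IsSignChange blk M lam i β :=
  ⟨hi, hpos, hβ.imp_right fun hβ => ⟨j, hij, hβ.trans (longRoot_neg_one i j).symm⟩⟩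

lemma IsTailForm.isMate (hβ : IsTailForm blk M lam i j β) : IsMate blk M lam i j :=
  ⟨fun hij => hβ.lt.ne (hij ▸ hβ.blk_eq), Or.inr ⟨hβ.blk_eq, hβ.apply_eq⟩⟩

lemma IsTailForm.eq_of_isMate (hd : IsBlockDominant blk M lam) (hβ : IsTailForm blk M lam i j β)
    {j' : Fin n} (hj' : IsMate blk M lam i j') : j' = j := by
  rcases hj'.eq with ⟨hb, h0⟩ | ⟨hb, heq⟩
  · exact absurd h0 (hβ.apply_ne j' hb).1
  · exact hd.eq_of_apply_eq (hb.trans hβ.blk_eq.symm) (heq.trans hβ.apply_eq.symm)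

lemma IsZeroForm.isMate (hβ : IsZeroForm blk M lam i j β) : IsMate blk M lam i j :=
  ⟨hβ.index_lt.ne, Or.inl ⟨hβ.blk_eq, hβ.apply_eq⟩⟩

lemma IsZeroForm.eq_of_isMate (hd : IsBlockDominant blk M lam) (hβ : IsZeroForm blk M lam i j β)
    {j' : Fin n} (hj' : IsMate blk M lam i j') : j' = j := by
  rcases hj'.eq with ⟨hb, h0⟩ | ⟨hb, heq⟩
  · exact hd.eq_of_apply_eq (hb.trans hβ.blk_eq.symm) (h0.trans hβ.apply_eq.symm)
  · exact absurd heq (hβ.apply_ne j' hb)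

lemma IsSignChange.apply_ne_neg (h : IsBlockParabolic S I blk M)
    (hβ : IsSignChange blk M lam i β) (hreg : theta S I (sRefl β lam) ≠ 0) {k : Fin n}
    (hk : blk k = blk i) : lam (𝐞 k) ≠ -lam (𝐞 i) := by
  intro hneg
  have hki : k ≠ i := by
    rintro rfl
    exact hβ.apply_ne_zero (self_eq_neg.mp hneg)
  refine hreg ((hβ.theta_eq_zero_iff h).mpr (h.theta_eq_zero_iff.mpr
    ⟨longRoot 1 k i, (h.longRoot_mem_PhiI_iff hki).mpr ⟨hk, Or.inl rfl⟩, ?_⟩))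
  simp [longRoot_one, sRefl_basisVec, hki, hneg]

lemma IsSignChange.eq_of_existsUnique (hβ : IsSignChange blk M lam i β)
    (huniq : ∀ j', IsMate blk M lam i j' → j' = j) : β = 𝐞 i ∨ β = 𝐞 i + 𝐞 j :=
  hβ.eq.imp_right fun ⟨j', hj', hβ⟩ => by rw [hβ, huniq j' hj', longRoot_neg_one]

lemma IsSignChange.isTailForm_or_isZeroForm (h : IsBlockParabolic S I blk M)
    (hd : IsBlockDominant blk M lam) (hβ : IsSignChange blk M lam i β)
    (hreg : theta S I (sRefl β lam) ≠ 0) (hij : IsMate blk M lam i j)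
    (huniq : ∀ j', IsMate blk M lam i j' → j' = j) :
    IsTailForm blk M lam i j β ∨ IsZeroForm blk M lam i j β := by
  have hneg (k : Fin n) (hk : blk k = blk i) := hβ.apply_ne_neg h hreg hk
  have heq := hβ.eq_of_existsUnique huniq
  have hpos := hij.isPosInt_add hd hβ.isPosInt
  rcases hij.eq with ⟨hb, h0⟩ | ⟨hb, hji⟩
  · refine Or.inr ⟨?_, hβ.lt, hb, heq, by rwa [h0, add_zero] at hpos, h0, hneg, fun l hl hli => ?_⟩
    · refine hij.ne.lt_or_gt.resolve_right fun hlt => ?_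
      have hsub := hd.isPosInt_sub hlt hb
      rw [h0, zero_sub] at hsub
      rw [h0, add_zero] at hpos
      exact hpos.not_neg hsub
    · have hmate := huniq l ⟨fun hil => hβ.lt.ne (hil ▸ hl), Or.inr ⟨hl, hli⟩⟩
      exact hβ.lt.ne (hb.symm.trans (hmate ▸ hl))
  · refine Or.inl ⟨hβ.lt, hb, heq, hβ.isPosInt, hji, fun k hk => ⟨fun hk0 => ?_, hneg k hk⟩⟩
    have hmate := huniq k ⟨fun hik => hβ.apply_ne_zero (hik ▸ hk0), Or.inl ⟨hk, hk0⟩⟩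
    exact hβ.lt.ne (hk.symm.trans (hmate ▸ hb))

theorem IsBlockParabolic.exists_isSignChange_iff (h : IsBlockParabolic S I blk M)
    (hd : IsBlockDominant blk M lam) (hβ : β ∈ PsiPP S (PhiI S I) (S.Φ : Set ℝ^n) lam) :
    (∃ i, IsSignChange blk M lam i β ∧ ∃! j, IsMate blk M lam i j) ↔
      (∃ i j, IsTailForm blk M lam i j β) ∨ ∃ i j, IsZeroForm blk M lam i j β := by
  constructor
  · rintro ⟨i, hi, j, hij, huniq⟩
    exact (hi.isTailForm_or_isZeroForm h hd (h.mem_PsiPP_iff.mp hβ).2 hij huniq).imp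
      (fun hβ => ⟨i, j, hβ⟩) fun hβ => ⟨i, j, hβ⟩
  · rintro (⟨i, j, hij⟩ | ⟨i, j, hij⟩)
    · exact ⟨i, hij.isMate.isSignChange hij.lt hij.isPosInt hij.eq, j, hij.isMate,
        fun _ => hij.eq_of_isMate hd⟩
    · have hpos : IsPosInt (2 * lam (𝐞 i)) := two_mul (lam (𝐞 i)) ▸ hij.isPosInt.add hij.isPosInt
      exact ⟨i, hij.isMate.isSignChange hij.lt hpos hij.eq, j, hij.isMate,
        fun _ => hij.eq_of_isMate hd⟩

end

/-! ### Blocks cut out by the complement of `I` -/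

/-- The data `0 = q_0 < q_1 < ⋯ < q_{m-1} ≤ n` cutting `{1, …, n}` into `m` consecutive blocks, the
last of which may be empty. -/
structure IsBlockEnds (n m : ℕ) (q : ℕ → ℕ) : Prop where
  zero : q 0 = 0
  lt : ∀ s, 1 ≤ s → s ≤ m - 1 → q (s - 1) < q s
  le : q (m - 1) ≤ n

/-- The 0-based number of the block containing the 0-based index `k`. -/
def blkOf {n : ℕ} (m : ℕ) (q : ℕ → ℕ) (k : Fin n) : ℕ :=
  Nat.findGreatest (fun s => q s ≤ k) (m - 1)

section

variable {n m : ℕ} {q : ℕ → ℕ}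

lemma blkOf_le (k : Fin n) : blkOf m q k ≤ m - 1 := Nat.findGreatest_le _

lemma blkOf_monotone : Monotone (blkOf m q : Fin n → ℕ) := fun _ _ hk =>
  Nat.findGreatest_mono_left (fun _ hs => hs.trans hk) _

namespace IsBlockEnds

variable (hq : IsBlockEnds n m q)
include hq

lemma apply_le_apply {s t : ℕ} (hst : s ≤ t) (ht : t ≤ m - 1) : q s ≤ q t :=
  monotoneOn_of_sub_one_le Set.ordConnected_Iic (fun s hs0 hs _ =>
    (hq.lt s (Nat.one_le_iff_ne_zero.mpr (isMin_iff_eq_bot.not.mp hs0)) hs).le)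
    (Set.mem_Iic.mpr (hst.trans ht)) ht hst

lemma apply_le {s : ℕ} (hs : s ≤ m - 1) : q s ≤ n := (hq.apply_le_apply hs le_rfl).trans hq.le

lemma apply_pos {s : ℕ} (h1 : 1 ≤ s) (hs : s ≤ m - 1) : 0 < q s := (hq.lt s h1 hs).pos

lemma le_blkOf_iff {s : ℕ} (hs : s ≤ m - 1) (k : Fin n) : s ≤ blkOf m q k ↔ q s ≤ k := by
  refine ⟨fun hle => ?_, fun hle => Nat.le_findGreatest hs hle⟩
  have hspec : q (blkOf m q k) ≤ k :=
    Nat.findGreatest_spec (P := fun s => q s ≤ k) (Nat.zero_le _) (hq.zero.trans_le k.1.zero_le)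
  exact (hq.apply_le_apply hle (blkOf_le k)).trans hspec

lemma blkOf_eq_iff {s : ℕ} (hs : s < m - 1) (k : Fin n) :
    blkOf m q k = s ↔ q s < (k : ℕ) + 1 ∧ (k : ℕ) + 1 ≤ q (s + 1) := by
  have hlow := hq.le_blkOf_iff hs.le k
  have hhigh := hq.le_blkOf_iff (s := s + 1) hs k
  omega

lemma blkOf_eq_last_iff (k : Fin n) : blkOf m q k = m - 1 ↔ q (m - 1) < (k : ℕ) + 1 := by
  have hlow := hq.le_blkOf_iff le_rfl k
  have hle := blkOf_le (m := m) (q := q) k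
  omega

lemma blkOf_eq_blkOf_iff {i j : Fin n} (hij : (j : ℕ) = i + 1) :
    blkOf m q i = blkOf m q j ↔ ∀ s, 1 ≤ s → s ≤ m - 1 → q s ≠ i + 1 := by
  constructor
  · intro hb s _ hs
    have hi := hq.le_blkOf_iff hs i
    have hj := hq.le_blkOf_iff hs j
    omega
  · intro hne
    have hle : blkOf m q i ≤ blkOf m q j := blkOf_monotone (Fin.le_def.mpr (by omega))
    by_contra hb
    have hi := hq.le_blkOf_iff (blkOf_le (q := q) j) i
    have hj := hq.le_blkOf_iff (blkOf_le (q := q) j) j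
    have hj' := hne (blkOf m q j) (by omega) (blkOf_le j)
    omega

lemma blkOf_eq_last_iff_forall_ne {i : Fin n} (hi : (i : ℕ) + 1 = n) :
    blkOf m q i = m - 1 ↔ ∀ s, 1 ≤ s → s ≤ m - 1 → q s ≠ i + 1 := by
  rw [hq.blkOf_eq_last_iff]
  constructor
  · intro hlt s _ hs
    have hle := hq.apply_le_apply hs le_rfl
    omega
  · intro hne
    have hle := hq.le
    rcases Nat.eq_zero_or_pos (m - 1) with h0 | hpos
    · rw [h0, hq.zero]
      omega
    · have hlast := hne (m - 1) hpos le_rfl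
      omega

end IsBlockEnds

end

/-! ### The standard realization of `B_n` -/

section

variable {n : ℕ}

lemma stdE_succ (k : Fin n) : stdE n (k + 1) = 𝐞 k := dif_pos ⟨Nat.le_add_left 1 k, k.2⟩

lemma exists_fin_succ_eq {k : ℕ} (h1 : 1 ≤ k) (hk : k ≤ n) : ∃ a : Fin n, (a : ℕ) + 1 = k :=
  ⟨⟨k - 1, by omega⟩, Nat.sub_add_cancel h1⟩

lemma longRoot_swap (η : ℤˣ) (i j : Fin n) : longRoot η i j = (-η) • longRoot η j i := by
  rcases Int.units_eq_one_or η with rfl | rfl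
  · rw [longRoot_one, longRoot_one, Units.neg_smul, one_smul, neg_sub]
  · rw [longRoot_neg_one, longRoot_neg_one, neg_neg, one_smul, add_comm]

lemma mem_bcdPos_iff (v : ℝ^n) : v ∈ bcdPos .B n ↔
    (∃ i, v = 𝐞 i) ∨ ∃ η i j, i < j ∧ v = longRoot η i j := by
  rw [or_comm]
  constructor
  · rintro (⟨i, j, h1, hij, hj, hv⟩ | ⟨i, h1, hi, rfl⟩)
    · obtain ⟨a, rfl⟩ := exists_fin_succ_eq h1 (hij.le.trans hj)
      obtain ⟨b, rfl⟩ := exists_fin_succ_eq (h1.trans hij.le) hj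
      have hab : a < b := Fin.lt_def.mpr (Nat.lt_of_succ_lt_succ hij)
      rw [stdE_succ, stdE_succ, ← longRoot_one, ← longRoot_neg_one] at hv
      exact Or.inl (hv.elim (fun hv => ⟨1, a, b, hab, hv⟩) fun hv => ⟨-1, a, b, hab, hv⟩)
    · obtain ⟨a, rfl⟩ := exists_fin_succ_eq h1 hi
      exact Or.inr ⟨a, stdE_succ a⟩
  · rintro (⟨η, i, j, hij, rfl⟩ | ⟨i, rfl⟩)
    · refine Or.inl ⟨i + 1, j + 1, Nat.le_add_left 1 i, Nat.succ_lt_succ hij, j.2, ?_⟩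
      rw [stdE_succ, stdE_succ, ← longRoot_one, ← longRoot_neg_one]
      exact (Int.units_eq_one_or η).imp (fun hη => by rw [hη]) fun hη => by rw [hη]
    · exact Or.inr ⟨i + 1, Nat.le_add_left 1 i, i.2, (stdE_succ i).symm⟩

lemma mem_bcdRoots_iff_bcdPos (v : ℝ^n) :
    v ∈ bcdRoots .B n ↔ v ∈ bcdPos .B n ∨ -v ∈ bcdPos .B n := by
  constructor
  · rintro (⟨i, j, h1, hij, hj, hv | hv | hv | hv⟩ | ⟨i, h1, hi, hv | hv⟩)
    · exact Or.inl (Or.inl ⟨i, j, h1, hij, hj, Or.inl hv⟩)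
    · exact Or.inr (Or.inl ⟨i, j, h1, hij, hj, Or.inl (neg_eq_iff_eq_neg.mpr hv)⟩)
    · exact Or.inl (Or.inl ⟨i, j, h1, hij, hj, Or.inr hv⟩)
    · exact Or.inr (Or.inl ⟨i, j, h1, hij, hj, Or.inr (neg_eq_iff_eq_neg.mpr hv)⟩)
    · exact Or.inl (Or.inr ⟨i, h1, hi, hv⟩)
    · exact Or.inr (Or.inr ⟨i, h1, hi, neg_eq_iff_eq_neg.mpr hv⟩)
  · rintro ((⟨i, j, h1, hij, hj, hv | hv⟩ | ⟨i, h1, hi, hv⟩) |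
      (⟨i, j, h1, hij, hj, hv | hv⟩ | ⟨i, h1, hi, hv⟩))
    · exact Or.inl ⟨i, j, h1, hij, hj, Or.inl hv⟩
    · exact Or.inl ⟨i, j, h1, hij, hj, Or.inr (Or.inr (Or.inl hv))⟩
    · exact Or.inr ⟨i, h1, hi, Or.inl hv⟩
    · exact Or.inl ⟨i, j, h1, hij, hj, Or.inr (Or.inl (neg_eq_iff_eq_neg.mp hv))⟩
    · exact Or.inl ⟨i, j, h1, hij, hj, Or.inr (Or.inr (Or.inr (neg_eq_iff_eq_neg.mp hv)))⟩
    · exact Or.inr ⟨i, h1, hi, Or.inr (neg_eq_iff_eq_neg.mp hv)⟩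

lemma mem_bcdRoots_iff (v : ℝ^n) : v ∈ bcdRoots .B n ↔
    (∃ (ε : ℤˣ) (i : Fin n), v = ε • 𝐞 i) ∨
      ∃ (ε η : ℤˣ) (i j : Fin n), i ≠ j ∧ v = ε • longRoot η i j := by
  rw [mem_bcdRoots_iff_bcdPos, mem_bcdPos_iff, mem_bcdPos_iff]
  constructor
  · rintro ((⟨i, hv⟩ | ⟨η, i, j, hij, hv⟩) | (⟨i, hv⟩ | ⟨η, i, j, hij, hv⟩))
    · exact Or.inl ⟨1, i, by rw [hv, one_smul]⟩
    · exact Or.inr ⟨1, η, i, j, hij.ne, by rw [hv, one_smul]⟩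
    · exact Or.inl ⟨-1, i, by rw [← hv, Units.neg_smul, one_smul, neg_neg]⟩
    · exact Or.inr ⟨-1, η, i, j, hij.ne, by rw [← hv, Units.neg_smul, one_smul, neg_neg]⟩
  · have hsign (ε : ℤˣ) (w : ℝ^n) : ε • w = w ∨ -(ε • w) = w :=
      (Int.units_eq_one_or ε).imp (fun hε => by rw [hε, one_smul])
        fun hε => by rw [hε, Units.neg_smul, one_smul, neg_neg]
    rintro (⟨ε, i, rfl⟩ | ⟨ε, η, i, j, hij, rfl⟩)
    · exact (hsign ε _).imp (fun hv => Or.inl ⟨i, hv⟩) fun hv => Or.inl ⟨i, hv⟩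
    · rcases lt_or_gt_of_ne hij with hlt | hlt
      · exact (hsign ε _).imp (fun hv => Or.inr ⟨η, i, j, hlt, hv⟩)
          fun hv => Or.inr ⟨η, i, j, hlt, hv⟩
      · rw [longRoot_swap, smul_smul]
        exact (hsign _ _).imp (fun hv => Or.inr ⟨η, j, i, hlt, hv⟩)
          fun hv => Or.inr ⟨η, j, i, hlt, hv⟩

lemma bcdAlpha_of_succ_eq {i j : Fin n} (hij : (j : ℕ) = i + 1) :
    bcdAlpha .B n (i + 1) = longRoot 1 i j := by
  rw [bcdAlpha, if_pos (hij ▸ j.2), stdE_succ, ← hij, stdE_succ, longRoot_one]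

lemma bcdAlpha_of_succ_eq_card {i : Fin n} (hi : (i : ℕ) + 1 = n) :
    bcdAlpha .B n (i + 1) = 𝐞 i := by
  simp only [bcdAlpha, hi, lt_irrefl, if_false]
  rw [← stdE_succ, hi]

lemma bcdAlpha_cases (i : Fin n) :
    (∃ j : Fin n, (j : ℕ) = i + 1 ∧ bcdAlpha .B n (i + 1) = longRoot 1 i j) ∨
      (i : ℕ) + 1 = n ∧ bcdAlpha .B n (i + 1) = 𝐞 i := by
  rcases (Nat.succ_le_of_lt i.2).lt_or_eq with hi | hi
  · exact Or.inl ⟨⟨i + 1, hi⟩, rfl, bcdAlpha_of_succ_eq rfl⟩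
  · exact Or.inr ⟨hi, bcdAlpha_of_succ_eq_card hi⟩

lemma bcdAlpha_apply_self (i : Fin n) : bcdAlpha .B n (i + 1) i = 1 := by
  rcases bcdAlpha_cases i with ⟨j, hj, heq⟩ | ⟨-, heq⟩
  · have hij : i ≠ j := by
      rintro rfl
      omega
    simp [heq, longRoot_one, basisVec_apply, hij]
  · simp [heq, basisVec_apply]

lemma bcdAlpha_apply_of_lt {i k : Fin n} (hk : k < i) : bcdAlpha .B n (i + 1) k = 0 := by
  rcases bcdAlpha_cases i with ⟨j, hj, heq⟩ | ⟨-, heq⟩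
  · have hkj : k ≠ j := by
      rintro rfl
      rw [Fin.lt_def] at hk
      omega
    simp [heq, longRoot_one, basisVec_apply, hkj, hk.ne]
  · simp [heq, basisVec_apply, hk.ne]

lemma bcdAlpha_injective : Function.Injective fun i : Fin n => bcdAlpha .B n (i + 1) := by
  refine .of_lt_imp_ne fun i j hij heq => one_ne_zero (α := ℝ) ?_
  rw [← bcdAlpha_apply_self i, ← bcdAlpha_apply_of_lt hij]
  exact congrArg (fun v : ℝ^n => v i) heq

lemma mem_bcdSimple_iff (hn : 0 < n) (v : ℝ^n) :
    v ∈ bcdSimple .B n ↔ ∃ i : Fin n, v = bcdAlpha .B n (i + 1) := by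
  constructor
  · rintro (⟨i, h1, hi, rfl⟩ | hv)
    · obtain ⟨a, rfl⟩ := exists_fin_succ_eq h1 hi.le
      exact ⟨a, (if_pos hi).symm⟩
    · obtain ⟨a, ha⟩ := exists_fin_succ_eq hn le_rfl
      refine ⟨a, ?_⟩
      rw [bcdAlpha_of_succ_eq_card ha, ← stdE_succ, ha]
      exact hv
  · rintro ⟨i, rfl⟩
    rcases (Nat.succ_le_of_lt i.2).lt_or_eq with hi | hi
    · exact Or.inl ⟨i + 1, Nat.le_add_left 1 i, hi, if_pos hi⟩
    · rw [bcdAlpha_of_succ_eq_card hi, ← stdE_succ]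
      exact Or.inr (congrArg (stdE n) hi)

end

/-! ### The parabolic subset determined by `q` -/

section

variable {n m : ℕ} {S : RootSys ℝ^n} {I : Finset ℝ^n} {q : ℕ → ℕ}

lemma mem_simple_iff (hΔ : (S.Δ : Set ℝ^n) = bcdSimple .B n) (v : ℝ^n) :
    v ∈ S.Δ ↔ ∃ k : Fin n, v = bcdAlpha .B n (k + 1) := by
  have hmem (w : ℝ^n) : w ∈ S.Δ ↔ w ∈ bcdSimple .B n := by rw [← hΔ, Finset.mem_coe]
  have hn : 0 < n := by
    rw [Nat.pos_iff_ne_zero]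
    rintro rfl
    exact S.ne_zero _ (S.pos_subset (S.simple_subset ((hmem (stdE 0 0)).mpr (Or.inr rfl))))
      (Subsingleton.elim _ _)
  rw [hmem, mem_bcdSimple_iff hn]

lemma isPosInt_two_mul_iff {z : ℂ} : IsPosInt (2 * z) ↔ ∃ k : ℤ, 0 < k ∧ z = (k : ℂ) / 2 :=
  exists_congr fun _ => and_congr_right' (by rw [eq_div_iff two_ne_zero, mul_comm])

namespace IsBlockEnds

variable (hq : IsBlockEnds n m q)
include hq

lemma mem_iff_forall_ne (hΔ : (S.Δ : Set ℝ^n) = bcdSimple .B n) (hI : I ⊆ S.Δ)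
    (hcompl : (S.Δ : Set ℝ^n) \ I = {v | ∃ s, 1 ≤ s ∧ s ≤ m - 1 ∧ v = bcdAlpha .B n (q s)})
    (v : ℝ^n) : v ∈ I ↔
      ∃ k : Fin n, (∀ s, 1 ≤ s → s ≤ m - 1 → q s ≠ k + 1) ∧ v = bcdAlpha .B n (k + 1) := by
  have hnotMem {k : Fin n} (hk : bcdAlpha .B n (k + 1) ∈ S.Δ) : bcdAlpha .B n (k + 1) ∉ I ↔
      ∃ s, 1 ≤ s ∧ s ≤ m - 1 ∧ bcdAlpha .B n (k + 1) = bcdAlpha .B n (q s) := by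
    have hset := Set.ext_iff.mp hcompl (bcdAlpha .B n (k + 1))
    exact (and_iff_right (Finset.mem_coe.mpr hk)).symm.trans hset
  constructor
  · intro hv
    obtain ⟨k, rfl⟩ := (mem_simple_iff hΔ v).mp (hI hv)
    refine ⟨k, fun s h1 hs hqs => ?_, rfl⟩
    exact (hnotMem (hI hv)).mpr ⟨s, h1, hs, by rw [hqs]⟩ hv
  · rintro ⟨k, hne, rfl⟩
    by_contra hk
    obtain ⟨s, h1, hs, heq⟩ := (hnotMem ((mem_simple_iff hΔ _).mpr ⟨k, rfl⟩)).mp hk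
    obtain ⟨a, ha⟩ := exists_fin_succ_eq (hq.apply_pos h1 hs) (hq.apply_le hs)
    rw [← ha] at heq
    exact hne s h1 hs (by rw [← ha, bcdAlpha_injective heq])

lemma isBlockParabolic (hΦ : (S.Φ : Set ℝ^n) = bcdRoots .B n)
    (hpos : (S.pos : Set ℝ^n) = bcdPos .B n) (hΔ : (S.Δ : Set ℝ^n) = bcdSimple .B n)
    (hI : I ⊆ S.Δ)
    (hcompl : (S.Δ : Set ℝ^n) \ I = {v | ∃ s, 1 ≤ s ∧ s ≤ m - 1 ∧ v = bcdAlpha .B n (q s)}) :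
    IsBlockParabolic S I (blkOf m q) (m - 1) where
  mem_Φ_iff v := by rw [← Finset.mem_coe, hΦ, mem_bcdRoots_iff]
  mem_pos_iff v := by rw [← Finset.mem_coe, hpos, mem_bcdPos_iff]
  monotone := blkOf_monotone
  le := blkOf_le
  mem_I_iff v := by
    rw [hq.mem_iff_forall_ne hΔ hI hcompl]
    constructor
    · rintro ⟨k, hne, rfl⟩
      rcases bcdAlpha_cases k with ⟨j, hj, heq⟩ | ⟨hk, heq⟩
      · exact Or.inl ⟨k, j, hj, (hq.blkOf_eq_blkOf_iff hj).mpr hne, heq⟩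
      · exact Or.inr ⟨k, hk, (hq.blkOf_eq_last_iff_forall_ne hk).mpr hne, heq⟩
    · rintro (⟨i, j, hij, hb, rfl⟩ | ⟨i, hi, hb, rfl⟩)
      · exact ⟨i, (hq.blkOf_eq_blkOf_iff hij).mp hb, (bcdAlpha_of_succ_eq hij).symm⟩
      · exact ⟨i, (hq.blkOf_eq_last_iff_forall_ne hi).mp hb, (bcdAlpha_of_succ_eq_card hi).symm⟩

/-! ### The two forms in the 1-based indexing -/

lemma forall_block_iff {t : ℕ} (ht : t < m - 1) (P : ℝ^n → Prop) :
    (∀ k, blkOf m q k = t → P (𝐞 k)) ↔ ∀ k, q t < k → k ≤ q (t + 1) → P (stdE n k) := by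
  constructor
  · intro hP k hk hk'
    obtain ⟨a, rfl⟩ := exists_fin_succ_eq (Nat.one_le_of_lt hk) (hk'.trans (hq.apply_le ht))
    rw [stdE_succ]
    exact hP a ((hq.blkOf_eq_iff ht a).mpr ⟨hk, hk'⟩)
  · intro hP k hk
    obtain ⟨hlt, hle⟩ := (hq.blkOf_eq_iff ht k).mp hk
    rw [← stdE_succ]
    exact hP _ hlt hle

lemma forall_last_block_iff (P : ℝ^n → Prop) :
    (∀ l, blkOf m q l = m - 1 → P (𝐞 l)) ↔ ∀ l, q (m - 1) < l → l ≤ n → P (stdE n l) := by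
  constructor
  · intro hP l hl hl'
    obtain ⟨a, rfl⟩ := exists_fin_succ_eq (Nat.one_le_of_lt hl) hl'
    rw [stdE_succ]
    exact hP a ((hq.blkOf_eq_last_iff a).mpr hl)
  · intro hP l hl
    rw [← stdE_succ]
    exact hP _ ((hq.blkOf_eq_last_iff l).mp hl) l.2

variable {lam : HStar ℝ^n} {β : ℝ^n}

lemma exists_isTailForm_iff : (∃ i j, IsTailForm (blkOf m q) (m - 1) lam i j β) ↔
    ∃ i j s : ℕ, 1 ≤ s ∧ s < m ∧ q (s - 1) < i ∧ i ≤ q s ∧ q s ≤ q (m - 1) ∧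
      q (m - 1) < j ∧ j ≤ n ∧ (β = stdE n i ∨ β = stdE n i + stdE n j) ∧
      (∃ k : ℤ, 0 < k ∧ lam (stdE n i) = (k : ℂ) / 2) ∧ lam (stdE n j) = lam (stdE n i) ∧
      ∀ k : ℕ, q (s - 1) < k → k ≤ q s →
        lam (stdE n k) ≠ 0 ∧ lam (stdE n k) ≠ -lam (stdE n i) := by
  constructor
  · rintro ⟨i, j, h⟩
    obtain ⟨hlt, hle⟩ := (hq.blkOf_eq_iff h.lt i).mp rfl
    refine ⟨i + 1, j + 1, blkOf m q i + 1, Nat.le_add_left 1 _, Nat.add_lt_of_lt_sub h.lt, hlt, hle,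
      hq.apply_le_apply h.lt le_rfl, (hq.blkOf_eq_last_iff j).mp h.blk_eq, j.2, ?_⟩
    rw [stdE_succ, stdE_succ]
    exact ⟨h.eq, isPosInt_two_mul_iff.mp h.isPosInt, h.apply_eq,
      (hq.forall_block_iff h.lt fun v => lam v ≠ 0 ∧ lam v ≠ -lam (𝐞 i)).mp h.apply_ne⟩
  · rintro ⟨i, j, s, h1, hs, hlt, hle, -, hj, hjn, heq, hpos, hji, hne⟩
    obtain ⟨t, rfl⟩ := Nat.exists_eq_add_of_le' h1
    have ht : t < m - 1 := Nat.lt_sub_of_add_lt hs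
    obtain ⟨a, rfl⟩ := exists_fin_succ_eq (Nat.one_le_of_lt hlt) (hle.trans (hq.apply_le ht))
    obtain ⟨b, rfl⟩ := exists_fin_succ_eq (Nat.one_le_of_lt hj) hjn
    simp only [stdE_succ, Nat.add_sub_cancel] at hlt heq hpos hji hne
    have ha : blkOf m q a = t := (hq.blkOf_eq_iff ht a).mpr ⟨hlt, hle⟩
    exact ⟨a, b, ha ▸ ht, (hq.blkOf_eq_last_iff b).mpr hj, heq, isPosInt_two_mul_iff.mpr hpos, hji,
      ha ▸ (hq.forall_block_iff ht fun v => lam v ≠ 0 ∧ lam v ≠ -lam (𝐞 a)).mpr hne⟩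

lemma exists_isZeroForm_iff : (∃ i j, IsZeroForm (blkOf m q) (m - 1) lam i j β) ↔
    ∃ i j s : ℕ, 1 ≤ s ∧ s < m ∧ q (s - 1) < i ∧ i < j ∧ j ≤ q s ∧
      (β = stdE n i ∨ β = stdE n i + stdE n j) ∧
      (∃ k : ℤ, 0 < k ∧ lam (stdE n i) = (k : ℂ)) ∧ lam (stdE n j) = 0 ∧
      (∀ k : ℕ, q (s - 1) < k → k ≤ q s → lam (stdE n k) ≠ -lam (stdE n i)) ∧
      ∀ l : ℕ, q (m - 1) < l → l ≤ n → lam (stdE n l) ≠ lam (stdE n i) := by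
  constructor
  · rintro ⟨i, j, h⟩
    obtain ⟨hlt, -⟩ := (hq.blkOf_eq_iff h.lt i).mp rfl
    obtain ⟨-, hle⟩ := (hq.blkOf_eq_iff h.lt j).mp h.blk_eq
    refine ⟨i + 1, j + 1, blkOf m q i + 1, Nat.le_add_left 1 _, Nat.add_lt_of_lt_sub h.lt, hlt,
      Nat.succ_lt_succ h.index_lt, hle, ?_⟩
    rw [stdE_succ, stdE_succ]
    exact ⟨h.eq, h.isPosInt, h.apply_eq,
      (hq.forall_block_iff h.lt fun v => lam v ≠ -lam (𝐞 i)).mp h.apply_ne_neg,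
      (hq.forall_last_block_iff fun v => lam v ≠ lam (𝐞 i)).mp h.apply_ne⟩
  · rintro ⟨i, j, s, h1, hs, hlt, hij, hle, heq, hpos, h0, hneg, hne⟩
    obtain ⟨t, rfl⟩ := Nat.exists_eq_add_of_le' h1
    have ht : t < m - 1 := Nat.lt_sub_of_add_lt hs
    have hjn := hle.trans (hq.apply_le ht)
    obtain ⟨a, rfl⟩ := exists_fin_succ_eq (Nat.one_le_of_lt hlt) (hij.le.trans hjn)
    obtain ⟨b, rfl⟩ := exists_fin_succ_eq (Nat.one_le_of_lt hij) hjn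
    simp only [stdE_succ, Nat.add_sub_cancel] at hlt heq hpos h0 hneg hne
    have ha : blkOf m q a = t := (hq.blkOf_eq_iff ht a).mpr ⟨hlt, hij.le.trans hle⟩
    have hb : blkOf m q b = t := (hq.blkOf_eq_iff ht b).mpr ⟨hlt.trans hij, hle⟩
    exact ⟨a, b, Nat.lt_of_succ_lt_succ hij, ha ▸ ht, hb.trans ha.symm, heq, hpos, h0,
      ha ▸ (hq.forall_block_iff ht fun v => lam v ≠ -lam (𝐞 a)).mpr hneg,
      (hq.forall_last_block_iff fun v => lam v ≠ lam (𝐞 a)).mpr hne⟩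

end IsBlockEnds

end

/-- Theorem 7.5 (simplicity criterion for `B_n`, in the standard realization in `ℝ^n`):
for `λ ∈ Λ_I⁺` with `Δ \ I = {α_{q_1}, …, α_{q_{m-1}}}`,
`Σ_{β ∈ Ψ_λ⁺} θ(s_β λ) = 0` iff every `β ∈ Ψ_λ⁺⁺` is of form (1) or (2) below. -/
theorem statement_19 (n : ℕ)
    (S : RootSys (EuclideanSpace ℝ (Fin n)))
    (hΦ : (S.Φ : Set (EuclideanSpace ℝ (Fin n))) = bcdRoots BCD.B n)
    (hpos : (S.pos : Set (EuclideanSpace ℝ (Fin n))) = bcdPos BCD.B n)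
    (hΔ : (S.Δ : Set (EuclideanSpace ℝ (Fin n))) = bcdSimple BCD.B n)
    (I : Finset (EuclideanSpace ℝ (Fin n))) (hI : I ⊆ S.Δ)
    (m : ℕ) (hm : 1 ≤ m) (q : ℕ → ℕ) (hq0 : q 0 = 0)
    (hmono : ∀ s : ℕ, 1 ≤ s → s ≤ m - 1 → q (s - 1) < q s)
    (hqn : q (m - 1) ≤ n)
    (hcompl : (S.Δ : Set (EuclideanSpace ℝ (Fin n))) \ (I : Set (EuclideanSpace ℝ (Fin n))) =
      {v | ∃ s : ℕ, 1 ≤ s ∧ s ≤ m - 1 ∧ v = bcdAlpha BCD.B n (q s)})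
    (lam : HStar (EuclideanSpace ℝ (Fin n)))
    (hlam : lam ∈ LambdaP (I : Set (EuclideanSpace ℝ (Fin n)))) :
    (∑ᶠ β ∈ PsiP S (PhiI S I) (S.Φ : Set (EuclideanSpace ℝ (Fin n))) lam,
        theta S I (sRefl β lam)) = 0 ↔
      ∀ β ∈ PsiPP S (PhiI S I) (S.Φ : Set (EuclideanSpace ℝ (Fin n))) lam,
        -- (1) β = e_i or e_i + e_j with q_{s-1} < i ≤ q_s ≤ q_{m-1} < j ≤ n,
        --     λ_i = λ_j ∈ ½ℤ_{>0} and λ_k ∉ {0, -λ_i} for q_{s-1} < k ≤ q_s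
        (∃ i j s : ℕ, 1 ≤ s ∧ s < m ∧ q (s - 1) < i ∧ i ≤ q s ∧ q s ≤ q (m - 1) ∧
          q (m - 1) < j ∧ j ≤ n ∧
          (β = stdE n i ∨ β = stdE n i + stdE n j) ∧
          (∃ k : ℤ, 0 < k ∧ lam (stdE n i) = (k : ℂ) / 2) ∧
          lam (stdE n j) = lam (stdE n i) ∧
          (∀ k : ℕ, q (s - 1) < k → k ≤ q s →
            lam (stdE n k) ≠ 0 ∧ lam (stdE n k) ≠ -lam (stdE n i))) ∨
        -- (2) β = e_i or e_i + e_j with q_{s-1} < i < j ≤ q_s, λ_i ∈ ℤ_{>0},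
        --     λ_j = 0, λ_k ≠ -λ_i for q_{s-1} < k ≤ q_s and λ_l ≠ λ_i for
        --     q_{m-1} < l ≤ n
        (∃ i j s : ℕ, 1 ≤ s ∧ s < m ∧ q (s - 1) < i ∧ i < j ∧ j ≤ q s ∧
          (β = stdE n i ∨ β = stdE n i + stdE n j) ∧
          (∃ k : ℤ, 0 < k ∧ lam (stdE n i) = (k : ℂ)) ∧
          lam (stdE n j) = 0 ∧
          (∀ k : ℕ, q (s - 1) < k → k ≤ q s → lam (stdE n k) ≠ -lam (stdE n i)) ∧
          (∀ l : ℕ, q (m - 1) < l → l ≤ n → lam (stdE n l) ≠ lam (stdE n i))) := by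
  have hq : IsBlockEnds n m q := ⟨hq0, hmono, hqn⟩
  have h : IsBlockParabolic S I (blkOf m q) (m - 1) := hq.isBlockParabolic hΦ hpos hΔ hI hcompl
  have hd := h.isBlockDominant hlam
  rw [h.finsum_theta_eq_zero_iff hd]
  exact forall₂_congr fun β hβ => (h.exists_isSignChange_iff hd hβ).trans
    (or_congr hq.exists_isTailForm_iff hq.exists_isZeroForm_iff)

end JantzenGVM
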